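/- arXiv:0805.4823 — 2 statements merged into one kernel-verified Lean document; each statement's English description precedes it below -/
import Mathlib

section
/- (Proposition 1.5: L^p decay and upper bound on the extinction time for the Dirichlet problem.) Let d ≥ 3, m < 1 with m ≠ 0, α ≥ 1, R > 0, and let p > max{p_c, 1} where p_c = d(1−m)/2. There exists a positive constant κ depending only on m, p and d such that the following holds. Let u solve the homogeneous Dirichlet problem for the FDE ∂ₜu = Δ(u^m)/m on B_{αR}(x₀) with nonnegative initial data u₀ ∈ L^p(B_{αR}(x₀)) supported in the closure of B_R(x₀), and extinction time T. Then, setting K_p = κ (αR)^{−2(1 − p_c/p)}, for every 0 ≤ s ≤ t ≤ T: ‖u(t,·)‖_{L^p(B_{αR}(x₀))}^{1−m} − ‖u(s,·)‖_{L^p(B_{αR}(x₀))}^{1−m} ≤ −K_p (t − s). In particular, T ≤ K_p^{−1} ‖u₀‖_{L^p(B_{αR}(x₀))}^{1−m}. -/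
open MeasureTheory Metric Set Real

/-- The spatial Laplacian of `f : ℝ^d → ℝ` at a point, as the sum of second
coordinate derivatives. -/
noncomputable def spaceLap {d : ℕ} (f : EuclideanSpace ℝ (Fin d) → ℝ)
    (x : EuclideanSpace ℝ (Fin d)) : ℝ :=
  ∑ i : Fin d, fderiv ℝ (fun y => fderiv ℝ f y (EuclideanSpace.single i 1)) x
    (EuclideanSpace.single i 1)

/-- `u` is a classical solution of the fast diffusion equation `∂ₜ u = Δ(u^m)/m`
on the space-time set `Q`: it is positive and smooth on `Q` and satisfies the
equation pointwise on `Q`. -/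
def IsFDESolM {d : ℕ} (m : ℝ) (Q : Set (ℝ × EuclideanSpace ℝ (Fin d)))
    (u : ℝ → EuclideanSpace ℝ (Fin d) → ℝ) : Prop :=
  (∀ p ∈ Q, 0 < u p.1 p.2) ∧
  ContDiffOn ℝ (⊤ : ℕ∞) (fun p : ℝ × EuclideanSpace ℝ (Fin d) => u p.1 p.2) Q ∧
  ∀ p ∈ Q, deriv (fun s => u s p.2) p.1 = spaceLap (fun y => u p.1 y ^ m) p.2 / m

/-- `u` solves the homogeneous Dirichlet problem for the FDE `∂ₜ u = Δ(u^m)/m` on the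
ball `B_ρ(x₀)` with initial data `u₀` and extinction time `T`. -/
def IsDirichletSolM {d : ℕ} (m : ℝ) (x₀ : EuclideanSpace ℝ (Fin d)) (ρ T : ℝ)
    (u : ℝ → EuclideanSpace ℝ (Fin d) → ℝ) (u₀ : EuclideanSpace ℝ (Fin d) → ℝ) : Prop :=
  (∀ t ∈ Icc 0 T, ∀ x ∈ closedBall x₀ ρ, 0 ≤ u t x) ∧
  ContinuousOn (fun p : ℝ × EuclideanSpace ℝ (Fin d) => u p.1 p.2)
    (Icc 0 T ×ˢ closedBall x₀ ρ) ∧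
  IsFDESolM m (Ioo 0 T ×ˢ ball x₀ ρ) u ∧
  (∀ x ∈ ball x₀ ρ, u 0 x = u₀ x) ∧
  (∀ t ∈ Ioc 0 T, ∀ x ∈ sphere x₀ ρ, u t x = 0) ∧
  (∀ x ∈ closedBall x₀ ρ, u T x = 0) ∧
  ∀ t ∈ Ioo 0 T, ∃ x ∈ ball x₀ ρ, u t x ≠ 0


theorem fd_hasDerivAt_maxpow (n : ℕ) (x : ℝ) :
    HasDerivAt (fun x : ℝ => max x 0 ^ (n+2)) (((n:ℝ)+2) * max x 0 ^ (n+1)) x := by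
  rcases lt_trichotomy x 0 with h | h | h
  · rw [max_eq_right h.le]
    have : (fun x : ℝ => max x 0 ^ (n+2)) =ᶠ[nhds x] fun _ => 0 := by
      filter_upwards [Iio_mem_nhds h] with y hy
      rw [max_eq_right (le_of_lt hy)]; simp
    refine (HasDerivAt.congr_of_eventuallyEq (hasDerivAt_const x (0:ℝ)) this).congr_deriv ?_
    simp
  · subst h
    rw [hasDerivAt_iff_isLittleO_nhds_zero]
    simp only [zero_add, max_self, ne_eq, Nat.add_eq_zero_iff, OfNat.ofNat_ne_zero, and_false, not_false_eq_true, zero_pow, sub_zero, one_ne_zero, mul_zero, smul_zero]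
    refine Asymptotics.IsBigO.trans_isLittleO (g := fun h : ℝ => h ^ (n+2)) ?_ ?_
    · refine Asymptotics.IsBigO.of_bound 1 (Filter.Eventually.of_forall fun y => ?_)
      rw [norm_pow, norm_pow, one_mul]
      gcongr
      rw [Real.norm_eq_abs, Real.norm_eq_abs, abs_of_nonneg (le_max_right _ _)]
      exact max_le (le_abs_self _) (abs_nonneg _)
    · simpa using Asymptotics.isLittleO_pow_id (𝕜 := ℝ) (n := n+2) (by omega)
  · rw [max_eq_left h.le]
    have : (fun x : ℝ => max x 0 ^ (n+2)) =ᶠ[nhds x] fun x => x^(n+2) := by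
      filter_upwards [Ioi_mem_nhds h] with y hy
      rw [max_eq_left (le_of_lt hy)]
    refine (HasDerivAt.congr_of_eventuallyEq (hasDerivAt_pow (n+2) x) this).congr_deriv ?_
    simp

theorem fd_contDiff_maxpow (n : ℕ) : ContDiff ℝ n (fun x : ℝ => max x 0 ^ (n+1)) := by
  induction n with
  | zero => simpa [contDiff_zero] using (continuous_id.max continuous_const)
  | succ n ih =>
    rw [show ((n+1 : ℕ) : WithTop ℕ∞) = (n : WithTop ℕ∞) + 1 by simp]
    rw [contDiff_succ_iff_deriv]
    refine ⟨fun x => (fd_hasDerivAt_maxpow n x).differentiableAt, by simp, ?_⟩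
    have : deriv (fun x : ℝ => max x 0 ^ (n+1+1)) = fun x => ((n:ℝ)+2) * max x 0 ^ (n+1) := by
      ext x; exact (fd_hasDerivAt_maxpow n x).deriv
    rw [this]
    exact contDiff_const.mul ih

/-- truncated power -/
noncomputable def fdTr (ε : ℝ) (n : ℕ) (b : ℝ) (u : ℝ) : ℝ := max (u - ε) 0 ^ n * u ^ (b - n)

theorem fdTr_zero {ε : ℝ} {n : ℕ} {b u : ℝ} (hn : n ≠ 0) (h : u ≤ ε) : fdTr ε n b u = 0 := by
  simp [fdTr, max_eq_right (sub_nonpos.2 h), hn]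

theorem fdTr_nonneg {ε : ℝ} {n : ℕ} {b u : ℝ} (h : 0 ≤ u) : 0 ≤ fdTr ε n b u := by
  unfold fdTr; positivity

theorem fdTr_contDiff {ε : ℝ} (hε : 0 < ε) (n : ℕ) (b : ℝ) : ContDiff ℝ n (fdTr ε (n+1) b) := by
  rw [contDiff_iff_contDiffAt]
  intro x
  rcases lt_or_ge x ε with h | h
  · have : fdTr ε (n+1) b =ᶠ[nhds x] fun _ => 0 := by
      filter_upwards [Iio_mem_nhds h] with y hy
      exact fdTr_zero (by omega) (le_of_lt hy)
    exact contDiffAt_const.congr_of_eventuallyEq this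
  · unfold fdTr
    refine ContDiffAt.mul ?_ (Real.contDiffAt_rpow_const_of_ne (by linarith))
    exact ((fd_contDiff_maxpow n).comp (contDiff_id.sub contDiff_const)).contDiffAt

theorem fdTr_hasDerivAt {ε : ℝ} (n : ℕ) (b : ℝ) {x : ℝ} (hx : 0 < x) :
    HasDerivAt (fdTr ε (n+2) b) (((n:ℝ)+2) * fdTr ε (n+1) (b-1) x + (b - (n+2)) * fdTr ε (n+2) (b-1) x) x := by
  have h1 : HasDerivAt (fun x => max (x - ε) 0 ^ (n+2)) (((n:ℝ)+2) * max (x-ε) 0 ^ (n+1)) x := by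
    have := (fd_hasDerivAt_maxpow n (x-ε)).comp x ((hasDerivAt_id x).sub_const ε)
    rw [mul_one] at this
    exact this
  have h2 := Real.hasDerivAt_rpow_const (x := x) (p := b - (n+2:ℕ)) (Or.inl hx.ne')
  refine (h1.mul h2).congr_deriv ?_
  unfold fdTr
  have e1 : b - 1 - ((n+1:ℕ):ℝ) = b - ((n+2 : ℕ):ℝ) := by push_cast; ring
  have e2 : b - 1 - ((n+2:ℕ):ℝ) = b - ((n+2 : ℕ):ℝ) - 1 := by ring
  rw [e1, e2]
  push_cast
  ring

theorem fdTr_deriv_zero {ε : ℝ} (hε : 0 < ε) (n : ℕ) (b : ℝ) {x : ℝ} (hx : x ≤ ε) :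
    deriv (fdTr ε (n+2) b) x = 0 := by
  rcases lt_or_eq_of_le hx with h | h
  · have : fdTr ε (n+2) b =ᶠ[nhds x] fun _ => 0 := by
      filter_upwards [Iio_mem_nhds h] with y hy
      exact fdTr_zero (by omega) (le_of_lt hy)
    rw [this.deriv_eq]; simp
  · rw [(fdTr_hasDerivAt n b (by linarith : 0 < x)).deriv, fdTr_zero (by omega) hx, fdTr_zero (by omega) hx]; simp

theorem fdTr_deriv2 {ε : ℝ} (n : ℕ) (b : ℝ) {x : ℝ} (hx : 0 < x) :
    deriv (deriv (fdTr ε (n+3) b)) x =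
      ((n:ℝ)+3) * (((n:ℝ)+2) * fdTr ε (n+1) (b-2) x + (b - 1 - (n+2)) * fdTr ε (n+2) (b-2) x)
      + (b - (n+3)) * (((n:ℝ)+3) * fdTr ε (n+2) (b-2) x + (b - 1 - (n+3)) * fdTr ε (n+3) (b-2) x) := by
  have : deriv (fdTr ε (n+3) b) =ᶠ[nhds x] fun x => (((n:ℝ)+3) * fdTr ε (n+2) (b-1) x + (b - (n+3)) * fdTr ε (n+3) (b-1) x) := by
    filter_upwards [Ioi_mem_nhds hx] with y hy
    have := (fdTr_hasDerivAt (ε := ε) (n+1) b (show 0 < y from hy)).deriv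
    rw [this]; push_cast; ring
  rw [this.deriv_eq]
  have h1 := fdTr_hasDerivAt (ε := ε) n (b-1) hx
  have h2 := fdTr_hasDerivAt (ε := ε) (n+1) (b-1) hx
  have h := ((h1.const_mul ((n:ℝ)+3)).add (h2.const_mul (b - (n+3)))).deriv
  refine Eq.trans h ?_
  rw [show b - 1 - 1 = b - 2 by ring]; push_cast; ring

set_option maxHeartbeats 1000000 in
theorem fdTr_key {ε : ℝ} (hε : 0 < ε) (i : ℕ) {p m : ℝ} (hp : 1 < p) (hpm : 0 < p + m - 1)
    (hk : p < 2 * ((i:ℝ)+2)) {u : ℝ} (hu : 0 < u) :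
    (2 * ((i:ℝ)+2)) * (p-1) / ((2 * ((i:ℝ)+2) - p + 1) * ((p+m-1)/2 + (i+2))^2) *
      (deriv (fdTr ε (i+2) ((p+m-1)/2)) u)^2 ≤ deriv (deriv (fdTr ε (2*(i+2)) p)) u * u ^ (m-1) := by
  rcases le_or_gt u ε with h | h
  · rw [fdTr_deriv_zero hε _ _ h]
    rw [show 2 * (i+2) = (2*i+1)+3 by ring, fdTr_deriv2 _ _ hu]
    rw [fdTr_zero (by omega) h, fdTr_zero (by omega) h, fdTr_zero (by omega) h]
    simp
  · rw [(fdTr_hasDerivAt i _ hu).deriv]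
    rw [show 2 * (i+2) = (2*i+1)+3 by ring, fdTr_deriv2 _ _ hu]
    obtain ⟨D, rfl⟩ : ∃ D, u = D + ε := ⟨u - ε, by ring⟩
    have hD : 0 < D := by linarith
    set a := (p+m-1)/2 with ha
    have hm : m = 2*a - p + 1 := by rw [ha]; ring
    have ha0 : 0 < a := by positivity
    unfold fdTr
    rw [add_sub_cancel_right, max_eq_left hD.le]
    set u := D + ε with hu'
    set J : ℝ := (i:ℝ) + 2 with hJ
    have hJ0 : 0 < J := by positivity
    have hc : ((2 * i + 1 : ℕ) : ℝ) = 2 * J - 3 := by rw [hJ]; push_cast; ring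
    have e1 : u ^ (a - 1 - ((i+1:ℕ):ℝ)) = u ^ (a - J) := by congr 1; push_cast; ring
    have e2 : u ^ (a - 1 - ((i+2:ℕ):ℝ)) = u ^ (a - J) / u := by
      rw [← Real.rpow_sub_one hu.ne']; congr 1; push_cast; ring
    have e3 : u ^ (p - 2 - ((2*i+1+1:ℕ):ℝ)) = u ^ (p - 2 * J) := by congr 1; push_cast; ring
    have e4 : u ^ (p - 2 - ((2*i+1+2:ℕ):ℝ)) = u ^ (p - 2 * J) / u := by
      rw [← Real.rpow_sub_one hu.ne']; congr 1; push_cast; ring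
    have e5 : u ^ (p - 2 - ((2*i+1+3:ℕ):ℝ)) = u ^ (p - 2 * J) / u / u := by
      rw [← Real.rpow_sub_one hu.ne', ← Real.rpow_sub_one hu.ne']; congr 1; push_cast; ring
    rw [e1, e2, e3, e4, e5, hc]
    have e6 : u ^ (p - 2 * J) * u ^ (m - 1) = (u ^ (a - J))^2 := by
      rw [← Real.rpow_add hu, ← Real.rpow_natCast, ← Real.rpow_mul hu.le]; congr 1; rw [hm]; push_cast; ring
    set X := u ^ (a - J) with hX
    have hX0 : 0 < X := Real.rpow_pos_of_pos hu _
    set y := D / u with hy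
    have hy0 : 0 < y := by positivity
    have hy1 : y ≤ 1 := by rw [hy, div_le_one hu]; linarith
    have hDy : D = y * u := by rw [hy]; field_simp
    have R : (2 * J - 3 + 3) * ((2 * J - 3 + 2) * (D ^ (2 * i + 1 + 1) * u ^ (p - 2 * J)) +
          (p - 1 - (2 * J - 3 + 2)) * (D ^ (2 * i + 1 + 2) * (u ^ (p - 2 * J) / u))) +
        (p - (2 * J - 3 + 3)) * ((2 * J - 3 + 3) * (D ^ (2 * i + 1 + 2) * (u ^ (p - 2 * J) / u)) +
            (p - 1 - (2 * J - 3 + 3)) * (D ^ (2 * i + 1 + 3) * (u ^ (p - 2 * J) / u / u)))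
        = (D^(i+1))^2 * u ^ (p - 2 * J) * (2*J*(2*J-1) - 2*(2*J)*(2*J-p)*y + (2*J-p)*(2*J-p+1)*y^2) := by
      rw [hy]; field_simp; ring
    have Lh : J * (D ^ (i + 1) * X) + (a - J) * (D ^ (i + 2) * (X / u)) = D^(i+1) * X * (J + (a-J)*y) := by
      rw [hy]; field_simp; ring
    rw [R, Lh]
    rw [show ∀ A B : ℝ, A * u ^ (p - 2 * J) * B * u ^ (m - 1) = A * (u ^ (p - 2 * J) * u ^ (m - 1)) * B by intros; ring, e6]
    have hN : 0 ≤ J + (a-J)*y := by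
      have : 0 ≤ J * (1 - y) + a * y := add_nonneg (mul_nonneg hJ0.le (by linarith)) (by positivity)
      linarith
    have hN1 : J + (a-J)*y ≤ a + J := by
      have : 0 ≤ J * y + a * (1 - y) := add_nonneg (by positivity) (mul_nonneg ha0.le (by linarith))
      linarith
    have q1 : 0 < 2*J - p + 1 := by linarith
    have Q : 2*J*(p-1)/(2*J-p+1) ≤ 2*J*(2*J-1) - 2*(2*J)*(2*J-p)*y + (2*J-p)*(2*J-p+1)*y^2 := by
      rw [div_le_iff₀ q1]
      have : 0 ≤ (2*J-p) * ((2*J-p+1)*y - 2*J)^2 := by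
        apply mul_nonneg (by linarith) (sq_nonneg _)
      linarith
    have S : (J + (a-J)*y)^2 ≤ (a+J)^2 := by gcongr
    calc 2 * J * (p - 1) / ((2 * J - p + 1) * (a + J) ^ 2) * (D ^ (i + 1) * X * (J + (a - J) * y)) ^ 2
        = (D ^ (i + 1)) ^ 2 * X ^ 2 * (2*J*(p-1)/(2*J-p+1)) * ((J + (a - J) * y)^2 / (a+J)^2) := by
          field_simp
      _ ≤ (D ^ (i + 1)) ^ 2 * X ^ 2 * (2*J*(p-1)/(2*J-p+1)) * 1 := by
          have : 0 ≤ p - 1 := by linarith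
          gcongr
          rw [div_le_one (by positivity)]; exact S
      _ ≤ _ := by rw [mul_one]; gcongr

theorem fd_bern {y q : ℝ} (hy : 0 ≤ y) (hq : 1 ≤ q) : 1 - y ^ q ≤ q * (1 - y) := by
  have := one_add_mul_self_le_rpow_one_add (s := y - 1) (by linarith) hq
  rw [show 1 + (y-1) = y by ring] at this
  linarith

theorem fdTr_eq {ε : ℝ} {n : ℕ} {b u : ℝ} (h : ε < u) (hε : 0 < ε) :
    fdTr ε n b u = u ^ b * (1 - ε/u)^n := by
  have hu : 0 < u := by linarith
  unfold fdTr
  rw [max_eq_left (by linarith), Real.rpow_sub hu, Real.rpow_natCast,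
    show u - ε = u * (1 - ε/u) by field_simp, mul_pow]
  field_simp

theorem fdTr_le {ε : ℝ} (hε : 0 < ε) {n : ℕ} (hn : n ≠ 0) {b u : ℝ} (hu : 0 ≤ u) : fdTr ε n b u ≤ u ^ b := by
  rcases le_or_gt u ε with h | h
  · rw [fdTr_zero hn h]; positivity
  · rw [fdTr_eq h hε]
    have : 0 < u := by linarith
    have h1 : 0 ≤ 1 - ε/u := by rw [sub_nonneg, div_le_one this]; exact h.le
    have h2 : 1 - ε/u ≤ 1 := by have : 0 ≤ ε/u := by positivity
                                linarith
    have := pow_le_one₀ (n := n) h1 h2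
    have h3 : 0 ≤ u ^ b := by positivity
    nlinarith

theorem fd_le_tr {ε : ℝ} (hε : 0 < ε) {n : ℕ} (hn : 1 ≤ n) {b u r M : ℝ} (hu : 0 ≤ u) (huM : u ≤ M)
    (hr : 1 ≤ r) (hb : 1 ≤ b * r) :
    u ^ (b * r) ≤ (fdTr ε n b u) ^ r + (n * r) * M ^ (b * r - 1) * ε := by
  have hM : 0 ≤ M := hu.trans huM
  have hnr : 1 ≤ (n:ℝ) * r := by
    have : (1:ℝ) ≤ n := by exact_mod_cast hn
    nlinarith
  have hpow : u ^ (b*r - 1) ≤ M ^ (b*r - 1) := Real.rpow_le_rpow hu huM (by linarith)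
  have hpow0 : 0 ≤ u ^ (b*r - 1) := by positivity
  rcases hu.eq_or_lt with h0 | h0
  · subst h0
    rw [Real.zero_rpow (by linarith)]
    have := fdTr_nonneg (ε := ε) (n := n) (b := b) (le_refl (0:ℝ))
    positivity
  have e : u ^ (b*r) = u ^ (b*r-1) * u := by rw [← Real.rpow_add_one h0.ne']; ring_nf
  rcases le_or_gt u ε with h | h
  · have := fdTr_nonneg (ε := ε) (n := n) (b := b) hu
    have h1 : 0 ≤ (fdTr ε n b u) ^ r := by positivity
    have : u ^ (b*r) ≤ (n * r) * M ^ (b * r - 1) * ε := by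
      rw [e]
      have : u ^ (b*r-1) ≤ (n * r) * M ^ (b * r - 1) := by nlinarith
      gcongr
    linarith
  · rw [fdTr_eq h hε]
    have h1 : 0 ≤ 1 - ε/u := by rw [sub_nonneg, div_le_one h0]; exact h.le
    rw [Real.mul_rpow (by positivity) (by positivity), ← Real.rpow_mul hu, ← Real.rpow_natCast, ← Real.rpow_mul h1]
    have := fd_bern h1 hnr
    have h2 : u ^ (b*r) * (1 - (1 - ε/u) ^ (n*r)) ≤ u ^ (b*r) * (n * r * (1 - (1-ε/u))) := by gcongr
    have h3 : u ^ (b*r) * (n * r * (1 - (1-ε/u))) = n * r * u ^ (b*r-1) * ε := by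
      rw [e]; field_simp; ring
    have h4 : n * r * u ^ (b*r-1) * ε ≤ n * r * M ^ (b*r-1) * ε := by gcongr
    linarith
theorem fd_ext {d : ℕ} {x₀ : EuclideanSpace ℝ (Fin d)} {ρ ε : ℝ} (hε : 0 < ε)
    {v g : EuclideanSpace ℝ (Fin d) → ℝ} {F : ℝ → ℝ} {n : WithTop ℕ∞}
    (hvc : ContinuousOn v (closedBall x₀ ρ)) (hv0 : ∀ x ∈ sphere x₀ ρ, v x = 0)
    (hF : ∀ s ≤ ε, F s = 0) (hFc : ContDiff ℝ n F) (hvs : ContDiffOn ℝ n v (ball x₀ ρ))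
    (hgs : ContDiffOn ℝ n g (ball x₀ ρ)) :
    ContDiff ℝ n (indicator (ball x₀ ρ) (fun x => F (v x) * g x)) ∧
    HasCompactSupport (indicator (ball x₀ ρ) (fun x => F (v x) * g x)) ∧
    ∀ x ∉ ball x₀ ρ, indicator (ball x₀ ρ) (fun x => F (v x) * g x) =ᶠ[nhds x] fun _ => 0 := by
  set K := closedBall x₀ ρ ∩ v ⁻¹' Ici ε with hK
  have hKc : IsClosed K := hvc.preimage_isClosed_of_isClosed isClosed_closedBall isClosed_Ici
  have hKB : K ⊆ ball x₀ ρ := by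
    rintro x ⟨hx, hx2⟩
    rcases (mem_closedBall.1 hx).lt_or_eq with h | h
    · exact h
    · have := hv0 x h
      simp only [mem_preimage, mem_Ici, this] at hx2
      linarith
  have hKcomp : IsCompact K := (isCompact_closedBall x₀ ρ).of_isClosed_subset hKc inter_subset_left
  have hz : ∀ x ∉ K, indicator (ball x₀ ρ) (fun x => F (v x) * g x) x = 0 := by
    intro x hx
    by_cases hB : x ∈ ball x₀ ρ
    · rw [indicator_of_mem hB]
      have : v x < ε := by
        by_contra h
        exact hx ⟨ball_subset_closedBall hB, not_lt.1 h⟩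
      rw [hF _ this.le, zero_mul]
    · exact indicator_of_notMem hB _
  have hz2 : ∀ x ∉ K, indicator (ball x₀ ρ) (fun x => F (v x) * g x) =ᶠ[nhds x] fun _ => 0 := by
    intro x hx
    filter_upwards [hKc.isOpen_compl.mem_nhds hx] with y hy
    exact hz y hy
  refine ⟨?_, HasCompactSupport.intro hKcomp hz, fun x hx => hz2 x (fun h => hx (hKB h))⟩
  rw [contDiff_iff_contDiffAt]
  intro x
  by_cases hB : x ∈ ball x₀ ρ
  · have hn := isOpen_ball.mem_nhds hB
    have : indicator (ball x₀ ρ) (fun x => F (v x) * g x) =ᶠ[nhds x] fun x => F (v x) * g x := by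
      filter_upwards [hn] with y hy
      exact indicator_of_mem hy _
    refine ContDiffAt.congr_of_eventuallyEq ?_ this
    exact (hFc.contDiffAt.comp x (hvs.contDiffAt hn)).mul (hgs.contDiffAt hn)
  · exact contDiffAt_const.congr_of_eventuallyEq (hz2 x (fun h => hB (hKB h)))

theorem fd_ibp {d : ℕ} {h : EuclideanSpace ℝ (Fin d) → ℝ} (hc : ContDiff ℝ 1 h)
    (hs : HasCompactSupport h) (e : EuclideanSpace ℝ (Fin d)) :
    Integrable (fun x => fderiv ℝ h x e) ∧ ∫ x, fderiv ℝ h x e = 0 := by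
  have hi : Integrable (fun x => fderiv ℝ h x e) := by
    apply Continuous.integrable_of_hasCompactSupport
    · exact (hc.continuous_fderiv (by norm_num)).clm_apply continuous_const
    · exact hs.fderiv_apply ℝ e
  refine ⟨hi, ?_⟩
  have := integral_mul_fderiv_eq_neg_fderiv_mul_of_integrable (μ := volume) (f := fun _ => (1:ℝ)) (g := h) (v := e) (by simp)
    (by simpa using hi) (by simpa using hc.continuous.integrable_of_hasCompactSupport hs)
    (by intros; fun_prop) (fun x _ => (hc.differentiable (by norm_num)) x)
  simpa using this

theorem fd_energy {d : ℕ} {x₀ : EuclideanSpace ℝ (Fin d)} {ρ ε m : ℝ} (hε : 0 < ε) (hm : m ≠ 0)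
    {v : EuclideanSpace ℝ (Fin d) → ℝ} {G : ℝ → ℝ}
    (hvc : ContinuousOn v (closedBall x₀ ρ)) (hv0 : ∀ x ∈ sphere x₀ ρ, v x = 0)
    (hvp : ∀ x ∈ ball x₀ ρ, 0 < v x)
    (hG : ∀ s ≤ ε, G s = 0) (hG' : ∀ s ≤ ε, deriv G s = 0) (hGc : ContDiff ℝ 1 G)
    (hvs : ContDiffOn ℝ (⊤ : ℕ∞) v (ball x₀ ρ)) :
    IntegrableOn (fun x => deriv G (v x) * (v x ^ (m-1) * ∑ i, (fderiv ℝ v x (EuclideanSpace.single i 1))^2)) (ball x₀ ρ) ∧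
    ∫ x in ball x₀ ρ, G (v x) * (spaceLap (fun y => v y ^ m) x / m) =
      - ∫ x in ball x₀ ρ, deriv G (v x) * (v x ^ (m-1) * ∑ i, (fderiv ℝ v x (EuclideanSpace.single i 1))^2) := by
  have hB : IsOpen (ball x₀ ρ) := isOpen_ball
  have hvm : ContDiffOn ℝ (⊤ : ℕ∞) (fun y => v y ^ m) (ball x₀ ρ) :=
    hvs.rpow_const_of_ne (fun x hx => (hvp x hx).ne')
  have hdv : ∀ e, ContDiffOn ℝ 1 (fun y => fderiv ℝ v y e) (ball x₀ ρ) := fun e =>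
    (hvs.fderiv_of_isOpen hB (m := 1) (by norm_cast)).clm_apply contDiffOn_const
  have hdvm : ∀ e, ContDiffOn ℝ 1 (fun y => fderiv ℝ (fun y => v y ^ m) y e) (ball x₀ ρ) := fun e =>
    (hvm.fderiv_of_isOpen hB (m := 1) (by norm_cast)).clm_apply contDiffOn_const
  have hvd : ∀ x ∈ ball x₀ ρ, DifferentiableAt ℝ v x := fun x hx =>
    (hvs.contDiffAt (hB.mem_nhds hx)).differentiableAt (by simp)
  -- integrability
  have hI : IntegrableOn (fun x => deriv G (v x) * (v x ^ (m-1) * ∑ i, (fderiv ℝ v x (EuclideanSpace.single i 1))^2)) (ball x₀ ρ) := by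
    have h := fd_ext (n := 0) hε hvc hv0 hG' (contDiff_zero.2 (hGc.continuous_deriv (by norm_num))) (hvs.of_le (by simp))
      (g := fun x => (v x ^ (m-1) * ∑ i, (fderiv ℝ v x (EuclideanSpace.single i 1))^2)) (by
        refine ContDiffOn.mul ((hvs.of_le (by simp)).rpow_const_of_ne (fun x hx => (hvp x hx).ne')) ?_
        refine ContDiffOn.sum fun i _ => ?_
        exact ((hdv _).of_le (by norm_num)).pow 2)
    rw [← integrable_indicator_iff measurableSet_ball]
    exact h.1.continuous.integrable_of_hasCompactSupport h.2.1
  refine ⟨hI, ?_⟩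
  have key : ∀ i : Fin d, IntegrableOn (fun x => m * (deriv G (v x) * (v x ^ (m-1) * (fderiv ℝ v x (EuclideanSpace.single i 1))^2)) +
      G (v x) * fderiv ℝ (fun y => fderiv ℝ (fun y => v y ^ m) y (EuclideanSpace.single i 1)) x (EuclideanSpace.single i 1)) (ball x₀ ρ) ∧
      ∫ x in ball x₀ ρ, (m * (deriv G (v x) * (v x ^ (m-1) * (fderiv ℝ v x (EuclideanSpace.single i 1))^2)) +
      G (v x) * fderiv ℝ (fun y => fderiv ℝ (fun y => v y ^ m) y (EuclideanSpace.single i 1)) x (EuclideanSpace.single i 1)) = 0 := by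
    intro i
    set e : EuclideanSpace ℝ (Fin d) := EuclideanSpace.single i 1
    obtain ⟨h1, h2, h3⟩ := fd_ext (n := 1) hε hvc hv0 hG hGc (hvs.of_le (by norm_cast))
      (g := fun x => fderiv ℝ (fun y => v y ^ m) x e) (hdvm e)
    obtain ⟨h4, h5⟩ := fd_ibp h1 h2 e
    have hz : ∀ x ∉ ball x₀ ρ, fderiv ℝ (indicator (ball x₀ ρ) (fun x => G (v x) * fderiv ℝ (fun y => v y ^ m) x e)) x e = 0 := by
      intro x hx
      rw [(h3 x hx).fderiv_eq]; simp
    have heq : ∀ x ∈ ball x₀ ρ, fderiv ℝ (indicator (ball x₀ ρ) (fun x => G (v x) * fderiv ℝ (fun y => v y ^ m) x e)) x e =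
       m * (deriv G (v x) * (v x ^ (m-1) * (fderiv ℝ v x e)^2)) +
      G (v x) * fderiv ℝ (fun y => fderiv ℝ (fun y => v y ^ m) y e) x e := by
      intro x hx
      have : indicator (ball x₀ ρ) (fun x => G (v x) * fderiv ℝ (fun y => v y ^ m) x e) =ᶠ[nhds x] fun x => G (v x) * fderiv ℝ (fun y => v y ^ m) x e := by
        filter_upwards [hB.mem_nhds hx] with y hy
        exact indicator_of_mem hy _
      rw [this.fderiv_eq]
      have a1 : HasFDerivAt (fun x => G (v x)) (deriv G (v x) • fderiv ℝ v x) x :=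
        ((hGc.differentiable (by norm_num)) (v x)).hasDerivAt.comp_hasFDerivAt x (hvd x hx).hasFDerivAt
      have a2 : DifferentiableAt ℝ (fun x => fderiv ℝ (fun y => v y ^ m) x e) x :=
        ((hdvm e).contDiffAt (hB.mem_nhds hx)).differentiableAt (by simp)
      have a3 : HasFDerivAt (fun y => v y ^ m) ((m * v x ^ (m-1)) • fderiv ℝ v x) x :=
        (hvd x hx).hasFDerivAt.rpow_const (Or.inl (hvp x hx).ne')
      have a4 := (a1.mul a2.hasFDerivAt).fderiv
      refine (congrArg (fun L => L e) a4).trans ?_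
      simp only [_root_.add_apply, _root_.smul_apply, smul_eq_mul]
      rw [a3.fderiv]
      simp only [_root_.smul_apply, smul_eq_mul]
      ring
    constructor
    · exact h4.integrableOn.congr_fun heq measurableSet_ball
    · rw [← setIntegral_congr_fun measurableSet_ball heq, setIntegral_eq_integral_of_forall_compl_eq_zero hz, h5]
  have hsum : ∫ x in ball x₀ ρ, ∑ i, (m * (deriv G (v x) * (v x ^ (m-1) * (fderiv ℝ v x (EuclideanSpace.single i 1))^2)) +
      G (v x) * fderiv ℝ (fun y => fderiv ℝ (fun y => v y ^ m) y (EuclideanSpace.single i 1)) x (EuclideanSpace.single i 1)) = 0 := by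
    rw [integral_finsetSum _ (fun i _ => (key i).1)]
    exact Finset.sum_eq_zero fun i _ => (key i).2
  have hsumI := integrable_finsetSum (μ := volume.restrict (ball x₀ ρ)) Finset.univ (fun i _ => (key i).1)
  have e1 : ∀ x, G (v x) * (spaceLap (fun y => v y ^ m) x / m) = m⁻¹ * ∑ i, (m * (deriv G (v x) * (v x ^ (m-1) * (fderiv ℝ v x (EuclideanSpace.single i 1))^2)) +
      G (v x) * fderiv ℝ (fun y => fderiv ℝ (fun y => v y ^ m) y (EuclideanSpace.single i 1)) x (EuclideanSpace.single i 1)) -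
      deriv G (v x) * (v x ^ (m-1) * ∑ i, (fderiv ℝ v x (EuclideanSpace.single i 1))^2) := by
    intro x
    rw [Finset.sum_add_distrib, ← Finset.mul_sum, ← Finset.mul_sum, ← Finset.mul_sum, ← Finset.mul_sum]
    unfold spaceLap
    field_simp
    ring
  simp_rw [e1]
  rw [integral_sub (hsumI.const_mul _) hI, integral_const_mul, hsum]
  simp

theorem fd_norm_sq {d : ℕ} (L : EuclideanSpace ℝ (Fin d) →L[ℝ] ℝ) :
    ‖L‖^2 ≤ ∑ i, (L (EuclideanSpace.single i 1))^2 := by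
  have h0 : 0 ≤ ∑ i, (L (EuclideanSpace.single i 1))^2 := Finset.sum_nonneg fun _ _ => sq_nonneg _
  have : ‖L‖ ≤ Real.sqrt (∑ i, (L (EuclideanSpace.single i 1))^2) := by
    refine L.opNorm_le_bound (Real.sqrt_nonneg _) fun x => ?_
    have hx : L x = ∑ i, x i * L (EuclideanSpace.single i 1) := by
      conv_lhs => rw [← (EuclideanSpace.basisFun (Fin d) ℝ).sum_repr x]
      simp [map_sum]
    rw [hx, Real.norm_eq_abs, EuclideanSpace.norm_eq, ← Real.sqrt_mul h0]
    apply Real.abs_le_sqrt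
    have := Finset.sum_mul_sq_le_sq_mul_sq Finset.univ (fun i => x i) (fun i => L (EuclideanSpace.single i 1))
    simp only [Real.norm_eq_abs, sq_abs]
    linarith
  calc ‖L‖^2 ≤ (Real.sqrt (∑ i, (L (EuclideanSpace.single i 1))^2))^2 := by gcongr
    _ = _ := Real.sq_sqrt h0

theorem fd_sobolev (d : ℕ) (hd : 3 ≤ d) (r : ℝ) (hr2 : 2 ≤ r) (hr : 1/2 - 1/(d:ℝ) ≤ 1/r) :
    ∃ C : ℝ, 0 < C ∧ ∀ (x₀ : EuclideanSpace ℝ (Fin d)) (ρ : ℝ) (w : EuclideanSpace ℝ (Fin d) → ℝ), 0 < ρ →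
      ContDiff ℝ 1 w → HasCompactSupport w →
      (∫ x in ball x₀ ρ, |w x| ^ r) ^ (2/r) ≤ C * ρ ^ (2 * (d * (1/r - (1/2 - 1/(d:ℝ))))) * ∫ x, ‖fderiv ℝ w x‖^2 := by
  have hd0 : (3:ℝ) ≤ d := by exact_mod_cast hd
  have : Nonempty (Fin d) := ⟨⟨0, by omega⟩⟩
  have : Nontrivial (EuclideanSpace ℝ (Fin d)) := inferInstance
  have hpos : 0 < 1/2 - 1/(d:ℝ) := by
    have : 1/(d:ℝ) ≤ 1/3 := one_div_le_one_div_of_le (by norm_num) hd0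
    linarith
  set θ := 1/r - (1/2 - 1/(d:ℝ)) with hθ
  have hθ0 : 0 ≤ θ := by linarith
  set c1 : ℝ := (eLpNormLESNormFDerivOfEqInnerConst (volume : Measure (EuclideanSpace ℝ (Fin d))) 2 : ℝ) with hc1
  set c2 : ℝ := (volume (ball (0 : EuclideanSpace ℝ (Fin d)) 1)).toReal with hc2
  have hc10 : 0 ≤ c1 := NNReal.coe_nonneg _
  refine ⟨(c1 * c2 ^ θ)^2 + 1, by positivity, ?_⟩
  intro x₀ ρ w hρ hw hws
  set s : ℝ := (1/2 - 1/(d:ℝ))⁻¹ with hs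
  have hs0 : 0 < s := by positivity
  have hr0 : 0 < r := by linarith
  have hrs : r ≤ s := by
    rw [hs, ← one_div, le_one_div hr0 hpos]; exact hr
  have S := eLpNorm_le_eLpNorm_fderiv_of_eq_inner (volume : Measure (EuclideanSpace ℝ (Fin d))) hw hws (p := 2) (p' := s.toNNReal)
    (by norm_num) (by simp; omega) (by rw [Real.coe_toNNReal _ hs0.le, hs, inv_inv]; simp)
  have H := eLpNorm_le_eLpNorm_mul_rpow_measure_univ (μ := volume.restrict (ball x₀ ρ)) (f := w)
    (p := ENNReal.ofReal r) (q := ENNReal.ofReal s) (ENNReal.ofReal_le_ofReal hrs) hw.continuous.aestronglyMeasurable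
  have S' : eLpNorm w (ENNReal.ofReal s) (volume.restrict (ball x₀ ρ)) ≤
      eLpNormLESNormFDerivOfEqInnerConst (volume : Measure (EuclideanSpace ℝ (Fin d))) 2 * eLpNorm (fderiv ℝ w) 2 volume :=
    (eLpNorm_mono_measure _ Measure.restrict_le_self).trans S
  have m1 : MemLp w (ENNReal.ofReal r) (volume.restrict (ball x₀ ρ)) :=
    (hw.continuous.memLp_of_hasCompactSupport hws).restrict _
  have m2 : MemLp (fderiv ℝ w) 2 volume :=
    (hw.continuous_fderiv (by norm_num)).memLp_of_hasCompactSupport (hws.fderiv ℝ)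
  have T := H.trans (mul_le_mul_left S' _)
  rw [ENNReal.toReal_ofReal hr0.le, ENNReal.toReal_ofReal hs0.le, m1.eLpNorm_eq_integral_rpow_norm (by simpa using hr0) (by simp),
    m2.eLpNorm_eq_integral_rpow_norm (by simp) (by simp), ENNReal.toReal_ofReal hr0.le, Measure.restrict_apply_univ,
    Measure.addHaar_ball _ _ hρ.le] at T
  have e1 : 1/r - 1/s = θ := by rw [hs, hθ, one_div, one_div, inv_inv]
  have hvol : (volume (ball (0 : EuclideanSpace ℝ (Fin d)) 1)) = ENNReal.ofReal c2 := by
    rw [hc2, ENNReal.ofReal_toReal measure_ball_lt_top.ne]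
  have hC : ((eLpNormLESNormFDerivOfEqInnerConst (volume : Measure (EuclideanSpace ℝ (Fin d))) 2 : NNReal) : ENNReal) = ENNReal.ofReal c1 := by
    rw [hc1, ENNReal.ofReal_coe_nnreal]
  have hc20 : 0 ≤ c2 := ENNReal.toReal_nonneg
  set I := ∫ x in ball x₀ ρ, ‖w x‖ ^ r with hI
  have hI0 : 0 ≤ I := integral_nonneg fun x => by positivity
  set J := ∫ x, ‖fderiv ℝ w x‖ ^ (ENNReal.toReal 2) with hJ
  have hJ0 : 0 ≤ J := integral_nonneg fun x => by positivity
  rw [e1, hvol, hC, ← ENNReal.ofReal_mul hc10,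
    ← ENNReal.ofReal_mul (p := ρ ^ _) (by positivity), ENNReal.ofReal_rpow_of_nonneg (by positivity) hθ0, ← ENNReal.ofReal_mul (by positivity), ENNReal.ofReal_le_ofReal_iff (by positivity)] at T
  have hJ' : ∫ x, ‖fderiv ℝ w x‖^2 = J := by
    rw [hJ]; simp
  have hI' : ∫ x in ball x₀ ρ, |w x| ^ r = I := rfl
  rw [hJ', hI']
  have T2 : (I ^ r⁻¹)^2 ≤ (c1 * J ^ (ENNReal.toReal 2)⁻¹ * (ρ ^ (Module.finrank ℝ (EuclideanSpace ℝ (Fin d))) * c2) ^ θ)^2 := by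
    gcongr
  have f1 : (I ^ r⁻¹)^2 = I ^ (2/r) := by
    rw [← Real.rpow_natCast, ← Real.rpow_mul hI0]; congr 1; push_cast; field_simp
  have f2 : (J ^ (ENNReal.toReal 2)⁻¹)^2 = J := by
    rw [← Real.rpow_natCast, ← Real.rpow_mul hJ0]; simp
  have f3 : ((ρ ^ d) ^ θ)^2 = ρ ^ (2 * (d * θ)) := by
    rw [← Real.rpow_natCast, ← Real.rpow_natCast, ← Real.rpow_mul hρ.le, ← Real.rpow_mul hρ.le]; congr 1; push_cast; ring
  rw [f1, finrank_euclideanSpace, Fintype.card_fin, Real.mul_rpow (by positivity) hc20, mul_pow, mul_pow, mul_pow, f2, f3] at T2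
  have g1 : 0 ≤ ρ ^ (2 * (d * θ)) * J := by positivity
  calc I ^ (2/r) ≤ _ := T2
    _ = (c1 * c2 ^ θ)^2 * (ρ ^ (2 * (d * θ)) * J) := by ring
    _ ≤ _ := by linarith

theorem fd_space (d : ℕ) (hd : 3 ≤ d) (m : ℝ) (hm1 : m < 1) (hm0 : m ≠ 0)
    (p : ℝ) (hp1 : 1 < p) (hpc : d * (1 - m) / 2 < p) (i : ℕ) (hi : p < 2 * ((i:ℝ)+2)) :
    ∃ k0 : ℝ, 0 < k0 ∧ ∀ (x₀ : EuclideanSpace ℝ (Fin d)) (ρ ε : ℝ) (v : EuclideanSpace ℝ (Fin d) → ℝ),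
      0 < ρ → 0 < ε → ContinuousOn v (closedBall x₀ ρ) → (∀ x ∈ sphere x₀ ρ, v x = 0) →
      (∀ x ∈ ball x₀ ρ, 0 < v x) → ContDiffOn ℝ (⊤ : ℕ∞) v (ball x₀ ρ) →
      ∫ x in ball x₀ ρ, deriv (fdTr ε (2*(i+2)) p) (v x) * (spaceLap (fun y => v y ^ m) x / m) ≤
      -(k0 * ρ ^ (-2 * (1 - d * (1 - m) / (2 * p))) *
        (∫ x in ball x₀ ρ, (fdTr ε (i+2) ((p+m-1)/2) (v x)) ^ (p / ((p+m-1)/2))) ^ ((p+m-1)/p)) := by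
  have hd0 : (3:ℝ) ≤ d := by exact_mod_cast hd
  have hpm : 0 < p + m - 1 := by nlinarith
  set a := (p+m-1)/2 with ha
  have ha0 : 0 < a := by positivity
  obtain ⟨C, hC, hS⟩ := fd_sobolev d hd (p/a) (by rw [le_div_iff₀ ha0, ha]; linarith) (by
    rw [one_div_div, div_sub_div _ _ (by norm_num) (by linarith), div_le_div_iff₀ (by linarith) (by linarith), ha]
    nlinarith)
  set c := (2 * ((i:ℝ)+2)) * (p-1) / ((2 * ((i:ℝ)+2) - p + 1) * (a + (i+2))^2) with hc
  have hc0 : 0 < c := by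
    have h1 : 0 < p - 1 := by linarith
    have h2 : 0 < 2 * ((i:ℝ)+2) - p + 1 := by linarith
    positivity
  refine ⟨c / C, by positivity, ?_⟩
  intro x₀ ρ ε v hρ hε hvc hv0 hvp hvs
  have hPhi : ContDiff ℝ 2 (fdTr ε (2*(i+2)) p) :=
    (fdTr_contDiff hε (2*i+3) p).of_le (by norm_cast; omega)
  have hGc : ContDiff ℝ 1 (deriv (fdTr ε (2*(i+2)) p)) := by
    have : ContDiff ℝ (1+1) (fdTr ε (2*(i+2)) p) := by rw [one_add_one_eq_two]; exact hPhi
    exact (contDiff_succ_iff_deriv.1 this).2.2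
  have hG : ∀ s ≤ ε, deriv (fdTr ε (2*(i+2)) p) s = 0 := fun s hs => fdTr_deriv_zero hε (2*i+2) p hs
  have hG' : ∀ s ≤ ε, deriv (deriv (fdTr ε (2*(i+2)) p)) s = 0 := by
    intro s hs
    rcases lt_or_eq_of_le hs with h | h
    · have : deriv (fdTr ε (2*(i+2)) p) =ᶠ[nhds s] fun _ => 0 := by
        filter_upwards [Iio_mem_nhds h] with y hy
        exact hG y (le_of_lt hy)
      rw [this.deriv_eq]; simp
    · rw [show 2 * (i+2) = (2*i+1)+3 by ring, fdTr_deriv2 _ _ (by linarith)]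
      rw [fdTr_zero (by omega) hs, fdTr_zero (by omega) hs, fdTr_zero (by omega) hs]
      simp
  obtain ⟨hI, hE⟩ := fd_energy (m := m) hε hm0 hvc hv0 hvp hG hG' hGc hvs
  rw [hE]
  set Eg := ∫ x in ball x₀ ρ, deriv (deriv (fdTr ε (2*(i+2)) p)) (v x) * (v x ^ (m-1) * ∑ i, (fderiv ℝ v x (EuclideanSpace.single i 1))^2) with hEg
  have hWc : ContDiff ℝ 1 (fdTr ε (i+2) a) := (fdTr_contDiff hε (i+1) a).of_le (by norm_cast; omega)
  obtain ⟨w1, w2, w3⟩ := fd_ext (n := 1) (F := fdTr ε (i+2) a) (g := fun _ => 1) hε hvc hv0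
    (fun s hs => fdTr_zero (by omega) hs) hWc (hvs.of_le (by norm_cast)) contDiffOn_const
  set w := indicator (ball x₀ ρ) (fun x => fdTr ε (i+2) a (v x) * 1) with hw
  have S := hS x₀ ρ w hρ w1 w2
  have e1 : ∫ x in ball x₀ ρ, |w x| ^ (p/a) = ∫ x in ball x₀ ρ, (fdTr ε (i+2) a (v x)) ^ (p / a) := by
    refine setIntegral_congr_fun measurableSet_ball fun x hx => ?_
    simp only [hw, indicator_of_mem hx, mul_one]
    rw [abs_of_nonneg (fdTr_nonneg (hvp x hx).le)]
  have e2 : ∫ x, ‖fderiv ℝ w x‖^2 = ∫ x in ball x₀ ρ, ‖fderiv ℝ w x‖^2 := by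
    rw [setIntegral_eq_integral_of_forall_compl_eq_zero]
    intro x hx
    rw [(w3 x hx).fderiv_eq]; simp
  have hwI : Integrable (fun x => ‖fderiv ℝ w x‖^2) := by
    apply Continuous.integrable_of_hasCompactSupport
    · exact (w1.continuous_fderiv (by norm_num)).norm.pow 2
    · exact (w2.fderiv ℝ).comp_left (g := fun L => ‖L‖^2) (by simp)
  have e3 : ∫ x in ball x₀ ρ, ‖fderiv ℝ w x‖^2 ≤ c⁻¹ * Eg := by
    rw [hEg, ← integral_const_mul]
    refine setIntegral_mono_on hwI.integrableOn (hI.const_mul _) measurableSet_ball fun x hx => ?_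
    have hn := isOpen_ball.mem_nhds hx
    have : w =ᶠ[nhds x] fun x => fdTr ε (i+2) a (v x) := by
      filter_upwards [hn] with y hy
      simp only [hw, indicator_of_mem hy, mul_one]
    have hvd : DifferentiableAt ℝ v x := (hvs.contDiffAt hn).differentiableAt (by simp)
    have a1 : HasFDerivAt (fun x => fdTr ε (i+2) a (v x)) (deriv (fdTr ε (i+2) a) (v x) • fderiv ℝ v x) x :=
      ((hWc.differentiable (by norm_num)) (v x)).hasDerivAt.comp_hasFDerivAt x hvd.hasFDerivAt
    rw [this.fderiv_eq, a1.fderiv]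
    refine (fd_norm_sq _).trans ?_
    simp only [_root_.smul_apply, smul_eq_mul, mul_pow]
    rw [← Finset.mul_sum, inv_mul_eq_div, le_div_iff₀ hc0, ← mul_assoc, mul_comm _ c, ← mul_assoc]
    refine mul_le_mul_of_nonneg_right ?_ (Finset.sum_nonneg fun _ _ => sq_nonneg _)
    exact fdTr_key hε i hp1 hpm hi (hvp x hx)
  have e4 : 2/(p/a) = (p+m-1)/p := by rw [ha]; field_simp
  have e5 : (2 * (d * (1/(p/a) - (1/2 - 1/(d:ℝ))))) = -(-2 * (1 - d * (1 - m) / (2 * p))) := by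
    rw [ha]; field_simp; ring
  rw [e1, e2, e4, e5, Real.rpow_neg hρ.le] at S
  set X := (∫ x in ball x₀ ρ, (fdTr ε (i+2) a (v x)) ^ (p / a)) ^ ((p+m-1)/p) with hX
  have hP : 0 < ρ ^ (-2 * (1 - d * (1 - m) / (2 * p))) := by positivity
  set P := ρ ^ (-2 * (1 - d * (1 - m) / (2 * p))) with hPd
  have S2 : X ≤ C * P⁻¹ * (c⁻¹ * Eg) := S.trans (by gcongr)
  have : c / C * P * X ≤ c / C * P * (C * P⁻¹ * (c⁻¹ * Eg)) := by gcongr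
  have h2 : c / C * P * (C * P⁻¹ * (c⁻¹ * Eg)) = Eg := by field_simp
  linarith

theorem fd_time {d : ℕ} {m : ℝ} {x₀ : EuclideanSpace ℝ (Fin d)} {ρ T ε : ℝ} (hε : 0 < ε)
    {u : ℝ → EuclideanSpace ℝ (Fin d) → ℝ} {u₀ : EuclideanSpace ℝ (Fin d) → ℝ}
    (hu : IsDirichletSolM m x₀ ρ T u u₀) {F : ℝ → ℝ} (hFc : ContDiff ℝ 1 F)
    (hF' : ∀ s ≤ ε, deriv F s = 0) {t : ℝ} (ht : t ∈ Ioo 0 T) :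
    HasDerivAt (fun τ => ∫ x in ball x₀ ρ, F (u τ x))
      (∫ x in ball x₀ ρ, deriv F (u t x) * deriv (fun s => u s x) t) t := by
  obtain ⟨-, hcont, ⟨-, hsm, -⟩, -, hbd, -, -⟩ := hu
  obtain ⟨a, ha0, hat⟩ := exists_between ht.1
  obtain ⟨b, htb, hbT⟩ := exists_between ht.2
  have hQ : IsOpen (Ioo 0 T ×ˢ ball x₀ ρ) := isOpen_Ioo.prod isOpen_ball
  set U := (fun q : ℝ × EuclideanSpace ℝ (Fin d) => u q.1 q.2) with hU
  have hd1 : ∀ q ∈ Ioo 0 T ×ˢ ball x₀ ρ, HasDerivAt (fun s => u s q.2) (fderiv ℝ U q (1,0)) q.1 := by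
    intro q hq
    have h1 : HasFDerivAt U (fderiv ℝ U q) (q.1, q.2) :=
      ((hsm.contDiffAt (hQ.mem_nhds hq)).differentiableAt (by simp)).hasFDerivAt
    have h2 : HasDerivAt (fun s : ℝ => (s, q.2)) ((1:ℝ), (0 : EuclideanSpace ℝ (Fin d))) q.1 :=
      (hasDerivAt_id q.1).prodMk (hasDerivAt_const _ _)
    exact h1.comp_hasDerivAt q.1 h2
  have hUc : ContinuousOn U (Ioo 0 T ×ˢ ball x₀ ρ) := hsm.continuousOn
  have hdc : ContinuousOn (fun q : ℝ × EuclideanSpace ℝ (Fin d) => deriv F (U q) * fderiv ℝ U q (1,0)) (Ioo 0 T ×ˢ ball x₀ ρ) := by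
    refine ContinuousOn.mul ((hFc.continuous_deriv (by norm_num)).comp_continuousOn hUc) ?_
    exact (hsm.continuousOn_fderiv_of_isOpen hQ (by simp)).clm_apply continuousOn_const
  set K := (Icc a b ×ˢ closedBall x₀ ρ) ∩ U ⁻¹' Ici ε with hK
  have hsub : Icc a b ⊆ Icc 0 T := Icc_subset_Icc ha0.le hbT.le
  have hKcomp : IsCompact K := by
    refine (isCompact_Icc.prod (isCompact_closedBall x₀ ρ)).of_isClosed_subset ?_ inter_subset_left
    exact (hcont.mono (prod_mono hsub subset_rfl)).preimage_isClosed_of_isClosed (isClosed_Icc.prod isClosed_closedBall) isClosed_Ici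
  have hKQ : K ⊆ Ioo 0 T ×ˢ ball x₀ ρ := by
    rintro q ⟨⟨h1, h2⟩, h3⟩
    refine ⟨⟨ha0.trans_le h1.1, h1.2.trans_lt hbT⟩, ?_⟩
    rcases (mem_closedBall.1 h2).lt_or_eq with h | h
    · exact h
    · have := hbd q.1 ⟨ha0.trans_le h1.1, h1.2.trans hbT.le⟩ q.2 h
      simp only [hU, mem_preimage, mem_Ici, this] at h3
      linarith
  obtain ⟨Cb, hCb⟩ := hKcomp.exists_bound_of_continuousOn (hdc.mono hKQ)
  have hIoo : ∀ τ ∈ Icc a b, τ ∈ Ioo 0 T := fun τ h => ⟨ha0.trans_le h.1, h.2.trans_lt hbT⟩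
  have hslice : ∀ τ ∈ Ioo 0 T, ContinuousOn (fun x => u τ x) (closedBall x₀ ρ) := by
    intro τ hτ
    exact hcont.comp (f := fun x => (τ, x)) (by fun_prop) (fun x hx => ⟨Ioo_subset_Icc_self hτ, hx⟩)
  have main := hasDerivAt_integral_of_dominated_loc_of_deriv_le (μ := volume.restrict (ball x₀ ρ))
    (F := fun τ x => F (u τ x)) (F' := fun τ x => deriv F (u τ x) * deriv (fun s => u s x) τ) (x₀ := t)
    (s := Icc a b) (bound := fun _ => max Cb 0) (Icc_mem_nhds hat htb) ?_ ?_ ?_ ?_ ?_ ?_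
  · exact main.2
  · filter_upwards [Icc_mem_nhds hat htb] with τ hτ
    exact ((hFc.continuous.comp_continuousOn (hslice τ (hIoo τ hτ))).mono ball_subset_closedBall).aestronglyMeasurable measurableSet_ball
  · exact ((hFc.continuous.comp_continuousOn (hslice t ht)).integrableOn_compact (isCompact_closedBall x₀ ρ)).mono_set ball_subset_closedBall
  · refine ContinuousOn.aestronglyMeasurable ?_ measurableSet_ball
    have := hdc.comp (f := fun x => (t, x)) (s := ball x₀ ρ) (by fun_prop) (fun x hx => ⟨ht, hx⟩)
    refine this.congr fun x hx => ?_
    simp only [Function.comp]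
    rw [(hd1 (t,x) ⟨ht, hx⟩).deriv]
  · filter_upwards [ae_restrict_mem measurableSet_ball] with x hx τ hτ
    by_cases h : (τ, x) ∈ K
    · have := hCb (τ, x) h
      rw [← (hd1 (τ,x) (hKQ h)).deriv] at this
      exact this.trans (le_max_left _ _)
    · have : u τ x < ε := by
        by_contra h'
        exact h ⟨⟨hτ, ball_subset_closedBall hx⟩, not_lt.1 h'⟩
      rw [hF' _ this.le]; simp
  · exact integrableOn_const measure_ball_lt_top.ne
  · filter_upwards [ae_restrict_mem measurableSet_ball] with x hx τ hτ
    have h1 := hd1 (τ, x) ⟨hIoo τ hτ, hx⟩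
    have := ((hFc.differentiable (by norm_num)) (u τ x)).hasDerivAt.comp τ h1
    rw [← h1.deriv] at this
    exact this

theorem fd_ode {Y Y' X : ℝ → ℝ} {s t k δ γ : ℝ} (hst : s ≤ t) (hk : 0 ≤ k) (hγ1 : γ < 1) (hγ0 : 0 ≤ γ)
    (hY : ∀ τ ∈ Icc s t, HasDerivAt Y (Y' τ) τ) (hX : ∀ τ ∈ Icc s t, 0 ≤ X τ)
    (hY' : ∀ τ ∈ Icc s t, Y' τ ≤ -(k * X τ ^ γ)) (hXY : ∀ τ ∈ Icc s t, Y τ ≤ X τ + δ)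
    (ht : δ < Y t) : (Y t - δ)^(1-γ) - (Y s - δ)^(1-γ) ≤ -((1-γ) * k * (t - s)) := by
  have hanti : AntitoneOn Y (Icc s t) := by
    refine antitoneOn_of_deriv_nonpos (convex_Icc s t) (fun τ hτ => (hY τ hτ).continuousAt.continuousWithinAt)
      (fun τ hτ => (hY τ (interior_subset hτ)).differentiableAt.differentiableWithinAt) fun τ hτ => ?_
    have hτ := interior_subset hτ
    rw [(hY τ hτ).deriv]
    have := hX τ hτ
    have : 0 ≤ k * X τ ^ γ := by positivity
    linarith [hY' τ hτ]
  have hpos : ∀ τ ∈ Icc s t, 0 < Y τ - δ := fun τ hτ => by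
    have := hanti hτ (right_mem_Icc.2 hst) hτ.2
    linarith
  have hD : ∀ τ ∈ Icc s t, HasDerivAt (fun τ => (Y τ - δ)^(1-γ)) (Y' τ * (1-γ) * (Y τ - δ)^(1-γ-1)) τ := fun τ hτ =>
    ((hY τ hτ).sub_const δ).rpow_const (Or.inl (hpos τ hτ).ne')
  have := (convex_Icc s t).image_sub_le_mul_sub_of_deriv_le (f := fun τ => (Y τ - δ)^(1-γ)) (C := -((1-γ)*k))
    (fun τ hτ => (hD τ hτ).continuousAt.continuousWithinAt)
    (fun τ hτ => (hD τ (interior_subset hτ)).differentiableAt.differentiableWithinAt)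
    (fun τ hτ => by
      have hτ := interior_subset hτ
      rw [(hD τ hτ).deriv]
      have h1 := hpos τ hτ
      have h2 : (Y τ - δ)^γ ≤ X τ ^ γ := Real.rpow_le_rpow h1.le (by linarith [hXY τ hτ]) hγ0
      have h3 : Y' τ ≤ -(k * (Y τ - δ)^γ) := (hY' τ hτ).trans (by gcongr)
      have h4 : (Y τ - δ)^γ * (Y τ - δ)^(1-γ-1) = 1 := by
        rw [← Real.rpow_add h1]; simp
      have h5 : 0 < (Y τ - δ)^(1-γ-1) := by positivity
      have h6 : 0 < 1 - γ := by linarith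
      calc Y' τ * (1-γ) * (Y τ - δ)^(1-γ-1) ≤ -(k * (Y τ - δ)^γ) * (1-γ) * (Y τ - δ)^(1-γ-1) := by gcongr
        _ = -((1-γ) * k * ((Y τ - δ)^γ * (Y τ - δ)^(1-γ-1))) := by ring
        _ = _ := by rw [h4]; ring
        _ ≤ _ := le_refl _)
    s (left_mem_Icc.2 hst) t (right_mem_Icc.2 hst) hst
  linarith

/-- **Proposition 1.5: `L^p` decay and upper bound on the extinction time for the
Dirichlet problem.** Here `p_c = d(1-m)/2` and `K_p = κ (αR)^{-2(1 - p_c/p)}`. -/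
theorem Lp_decay_dirichlet
    (d : ℕ) (hd : 3 ≤ d) (m : ℝ) (hm1 : m < 1) (hm0 : m ≠ 0)
    (p : ℝ) (hp : max (d * (1 - m) / 2) 1 < p) :
    ∃ κ : ℝ, 0 < κ ∧
      ∀ (x₀ : EuclideanSpace ℝ (Fin d)) (α R T : ℝ), 1 ≤ α → 0 < R → 0 < T →
      ∀ (u : ℝ → EuclideanSpace ℝ (Fin d) → ℝ) (u₀ : EuclideanSpace ℝ (Fin d) → ℝ),
        (∀ x, 0 ≤ u₀ x) →
        (Function.support u₀ ⊆ closedBall x₀ R) →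
        IntegrableOn (fun x => u₀ x ^ p) (ball x₀ (α * R)) →
        IsDirichletSolM m x₀ (α * R) T u u₀ →
        (∀ s t : ℝ, 0 ≤ s → s ≤ t → t ≤ T →
          ((∫ x in ball x₀ (α * R), u t x ^ p) ^ (1 / p)) ^ (1 - m) -
            ((∫ x in ball x₀ (α * R), u s x ^ p) ^ (1 / p)) ^ (1 - m) ≤
          -(κ * (α * R) ^ (-2 * (1 - d * (1 - m) / (2 * p))) * (t - s))) ∧
        T ≤ (κ * (α * R) ^ (-2 * (1 - d * (1 - m) / (2 * p))))⁻¹ *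
          ((∫ x in ball x₀ (α * R), u₀ x ^ p) ^ (1 / p)) ^ (1 - m) := by
  have hp1 : 1 < p := (le_max_right _ _).trans_lt hp
  have hpc : d * (1 - m) / 2 < p := (le_max_left _ _).trans_lt hp
  have hd0 : (3:ℝ) ≤ d := by exact_mod_cast hd
  have hpm : 0 < p + m - 1 := by nlinarith
  obtain ⟨i, hi'⟩ := exists_nat_gt p
  have hi : p < 2 * ((i:ℝ)+2) := by
    have : (0:ℝ) ≤ i := Nat.cast_nonneg i
    linarith
  obtain ⟨k0, hk0, hsp⟩ := fd_space d hd m hm1 hm0 p hp1 hpc i hi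
  have h1m : 0 < 1 - m := by linarith
  have hp0 : 0 < p := by linarith
  refine ⟨(1-m)/p * k0, by positivity, ?_⟩
  intro x₀ α R T hα hR hT u u₀ hu₀ _ _ hu
  have hρ : 0 < α * R := by positivity
  set ρ := α * R with hρd
  set P := ρ ^ (-2 * (1 - d * (1 - m) / (2 * p))) with hPd
  have hP : 0 < P := by positivity
  have hu' := hu
  obtain ⟨hnn, hcont, ⟨hpos, hsm, heq⟩, hinit, hbd, hTz, -⟩ := hu'
  set Y : ℝ → ℝ := fun t => ∫ x in ball x₀ ρ, u t x ^ p with hY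
  have hQ : IsOpen (Ioo 0 T ×ˢ ball x₀ ρ) := isOpen_Ioo.prod isOpen_ball
  obtain ⟨M, hM⟩ := (isCompact_Icc.prod (isCompact_closedBall x₀ ρ)).exists_bound_of_continuousOn hcont
  have huM : ∀ t ∈ Icc 0 T, ∀ x ∈ closedBall x₀ ρ, u t x ≤ M := fun t ht x hx =>
    (le_abs_self _).trans (hM (t,x) ⟨ht, hx⟩)
  have hM0 : 0 ≤ M := (hnn 0 ⟨le_rfl, hT.le⟩ x₀ (mem_closedBall_self hρ.le)).trans
    (huM 0 ⟨le_rfl, hT.le⟩ x₀ (mem_closedBall_self hρ.le))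
  have hslice : ∀ τ ∈ Icc 0 T, ContinuousOn (fun x => u τ x) (closedBall x₀ ρ) := by
    intro τ hτ
    exact hcont.comp (f := fun x => (τ, x)) (by fun_prop) (fun x hx => ⟨hτ, hx⟩)
  have hint : ∀ τ ∈ Icc 0 T, ∀ f : ℝ → ℝ, Continuous f → IntegrableOn (fun x => f (u τ x)) (ball x₀ ρ) := by
    intro τ hτ f hf
    exact ((hf.comp_continuousOn (hslice τ hτ)).integrableOn_compact (isCompact_closedBall x₀ ρ)).mono_set ball_subset_closedBall
  have hpcont : Continuous (fun s : ℝ => s ^ p) := Real.continuous_rpow_const hp0.le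
  have hYnn : ∀ t ∈ Icc 0 T, 0 ≤ Y t := fun t ht =>
    setIntegral_nonneg measurableSet_ball fun x hx => Real.rpow_nonneg (hnn t ht x (ball_subset_closedBall hx)) _
  -- continuity of Y
  have hYc : ContinuousOn Y (Icc 0 T) := by
    refine continuousOn_of_dominated (bound := fun _ => M ^ p) ?_ ?_ ?_ ?_
    · exact fun t ht => (hint t ht _ hpcont).aestronglyMeasurable
    · intro t ht
      filter_upwards [ae_restrict_mem measurableSet_ball] with x hx
      have h0 := hnn t ht x (ball_subset_closedBall hx)
      rw [Real.norm_eq_abs, abs_of_nonneg (Real.rpow_nonneg h0 _)]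
      exact Real.rpow_le_rpow h0 (huM t ht x (ball_subset_closedBall hx)) hp0.le
    · exact integrableOn_const measure_ball_lt_top.ne
    · filter_upwards [ae_restrict_mem measurableSet_ball] with x hx
      refine hpcont.comp_continuousOn ?_
      exact hcont.comp (f := fun t => (t, x)) (by fun_prop) (fun t ht => ⟨ht, ball_subset_closedBall hx⟩)
  -- positivity of Y
  have hYpos : ∀ t ∈ Ioo 0 T, 0 < Y t := by
    intro t ht
    have hti := Ioo_subset_Icc_self ht
    rw [hY]
    refine (setIntegral_pos_iff_support_of_nonneg_ae ?_ (hint t hti _ hpcont)).2 ?_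
    · filter_upwards [ae_restrict_mem measurableSet_ball] with x hx
      exact Real.rpow_nonneg (hnn t hti x (ball_subset_closedBall hx)) _
    · have : ball x₀ ρ ⊆ Function.support (fun x => u t x ^ p) ∩ ball x₀ ρ := fun x hx =>
        ⟨(Real.rpow_pos_of_pos (hpos (t,x) ⟨ht, hx⟩) p).ne', hx⟩
      exact (measure_ball_pos volume x₀ hρ).trans_le (measure_mono this)
  set γ := (p+m-1)/p with hγ
  have hγ1 : 1 - γ = (1-m)/p := by rw [hγ]; field_simp; ring
  have hγ0 : 0 ≤ γ := by positivity
  have hγlt : γ < 1 := by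
    have : 0 < (1-m)/p := by positivity
    linarith
  set V := (volume (ball x₀ ρ)).toReal with hV
  set a := (p+m-1)/2 with ha
  have ha0 : 0 < a := by positivity
  have hra : 1 ≤ p / a := by rw [le_div_iff₀ ha0, ha]; linarith
  have hap : a * (p/a) = p := by field_simp
  set A := (((i+2 : ℕ):ℝ) * (p/a)) * M ^ (p-1) * V with hA
  set A' := (((2*(i+2) : ℕ):ℝ) * 1) * M ^ (p-1) * V with hA'
  -- interior estimate
  have hmain : ∀ s t : ℝ, 0 < s → s ≤ t → t < T →
      (Y t)^(1-γ) - (Y s)^(1-γ) ≤ -((1-γ) * (k0 * P) * (t - s)) := by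
    intro s t hs hst htT
    have ht0 : 0 < t := hs.trans_le hst
    have hsT : s < T := hst.trans_lt htT
    have hsub : ∀ τ ∈ Icc s t, τ ∈ Ioo 0 T := fun τ h => ⟨hs.trans_le h.1, h.2.trans_lt htT⟩
    set Yε : ℝ → ℝ → ℝ := fun ε t => ∫ x in ball x₀ ρ, fdTr ε (2*(i+2)) p (u t x) with hYε
    have hup : ∀ ε > 0, ∀ τ ∈ Ioo 0 T, Yε ε τ ≤ Y τ := by
      intro ε hε τ hτ
      have hτ' := Ioo_subset_Icc_self hτ
      refine setIntegral_mono_on (hint τ hτ' _ (fdTr_contDiff hε (2*i+3) p).continuous) (hint τ hτ' _ hpcont) measurableSet_ball fun x hx => ?_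
      exact fdTr_le hε (by omega) (hnn τ hτ' x (ball_subset_closedBall hx))
    have hlow : ∀ ε > 0, ∀ τ ∈ Ioo 0 T, Y τ ≤ Yε ε τ + A' * ε := by
      intro ε hε τ hτ
      have hτ' := Ioo_subset_Icc_self hτ
      have h1 := hint τ hτ' _ (fdTr_contDiff hε (2*i+3) p).continuous
      have h2 : IntegrableOn (fun _ => (((2*(i+2) : ℕ):ℝ) * 1) * M ^ (p-1) * ε) (ball x₀ ρ) := integrableOn_const measure_ball_lt_top.ne
      have h3 : Yε ε τ + A' * ε = ∫ x in ball x₀ ρ, (fdTr ε (2*(i+2)) p (u τ x) + (((2*(i+2) : ℕ):ℝ) * 1) * M ^ (p-1) * ε) := by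
        have := integral_add (μ := volume.restrict (ball x₀ ρ)) h1 h2
        refine Eq.trans ?_ this.symm
        rw [setIntegral_const, hA', smul_eq_mul, Measure.real, ← hV]
        refine congrArg₂ (· + ·) rfl ?_
        ring
      rw [h3]
      refine setIntegral_mono_on (hint τ hτ' _ hpcont) (h1.add h2) measurableSet_ball fun x hx => ?_
      have := fd_le_tr hε (n := 2*(i+2)) (by omega) (b := p) (r := 1) (hnn τ hτ' x (ball_subset_closedBall hx))
        (huM τ hτ' x (ball_subset_closedBall hx)) le_rfl (by linarith)
      rw [Real.rpow_one, mul_one p] at this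
      exact this
    have hXlow : ∀ ε > 0, ∀ τ ∈ Ioo 0 T, Y τ ≤ (∫ x in ball x₀ ρ, (fdTr ε (i+2) a (u τ x)) ^ (p / a)) + A * ε := by
      intro ε hε τ hτ
      have hτ' := Ioo_subset_Icc_self hτ
      have h1 := hint τ hτ' (fun z => (fdTr ε (i+2) a z) ^ (p / a))
        ((Real.continuous_rpow_const (by linarith)).comp (fdTr_contDiff hε (i+1) a).continuous)
      have h2 : IntegrableOn (fun _ => (((i+2 : ℕ):ℝ) * (p/a)) * M ^ (p-1) * ε) (ball x₀ ρ) := integrableOn_const measure_ball_lt_top.ne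
      have h3 : (∫ x in ball x₀ ρ, (fdTr ε (i+2) a (u τ x)) ^ (p / a)) + A * ε = ∫ x in ball x₀ ρ, ((fdTr ε (i+2) a (u τ x)) ^ (p / a) + (((i+2 : ℕ):ℝ) * (p/a)) * M ^ (p-1) * ε) := by
        have := integral_add (μ := volume.restrict (ball x₀ ρ)) h1 h2
        refine Eq.trans ?_ this.symm
        rw [setIntegral_const, hA, smul_eq_mul, Measure.real, ← hV]; ring_nf
      rw [h3]
      refine setIntegral_mono_on (hint τ hτ' _ hpcont) (h1.add h2) measurableSet_ball fun x hx => ?_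
      have := fd_le_tr hε (n := i+2) (by omega) (b := a) (r := p/a) (hnn τ hτ' x (ball_subset_closedBall hx))
        (huM τ hτ' x (ball_subset_closedBall hx)) hra (by rw [hap]; exact hp1.le)
      rw [hap] at this
      exact this
    have hode : ∀ ε > 0, A * ε < Yε ε t →
        (Yε ε t - A * ε)^(1-γ) - (Yε ε s - A * ε)^(1-γ) ≤ -((1-γ) * (k0 * P) * (t - s)) := by
      intro ε hε hlt
      refine fd_ode (Y' := fun τ => ∫ x in ball x₀ ρ, deriv (fdTr ε (2*(i+2)) p) (u τ x) * deriv (fun s => u s x) τ)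
        (X := fun τ => ∫ x in ball x₀ ρ, (fdTr ε (i+2) a (u τ x)) ^ (p / a)) hst (by positivity) hγlt hγ0 ?_ ?_ ?_ ?_ hlt
      · intro τ hτ
        exact fd_time hε hu ((fdTr_contDiff hε (2*i+3) p).of_le (by norm_cast; omega))
          (fun s hs => fdTr_deriv_zero hε (2*i+2) p hs) (hsub τ hτ)
      · intro τ hτ
        exact setIntegral_nonneg measurableSet_ball fun x hx => Real.rpow_nonneg
          (fdTr_nonneg (hnn τ (Ioo_subset_Icc_self (hsub τ hτ)) x (ball_subset_closedBall hx))) _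
      · intro τ hτ
        have hτ' := hsub τ hτ
        have := hsp x₀ ρ ε (u τ) hρ hε (hslice τ (Ioo_subset_Icc_self hτ')) (hbd τ (Ioo_subset_Ioc_self hτ'))
          (fun x hx => hpos (τ,x) ⟨hτ', hx⟩)
          (hsm.comp (f := fun x => (τ, x)) (by fun_prop) (fun x hx => ⟨hτ', hx⟩))
        refine le_of_eq_of_le ?_ this
        refine setIntegral_congr_fun measurableSet_ball fun x hx => ?_
        have h := heq (τ, x) ⟨hτ', hx⟩
        simp only at h ⊢
        rw [h]
      · intro τ hτ
        exact (hup ε hε τ (hsub τ hτ)).trans (hXlow ε hε τ (hsub τ hτ))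
    have htI : t ∈ Ioo 0 T := ⟨ht0, htT⟩
    have hsI : s ∈ Ioo 0 T := ⟨hs, hsT⟩
    have lim : ∀ τ ∈ Ioo 0 T, Filter.Tendsto (fun ε => Yε ε τ - A * ε) (nhdsWithin 0 (Ioi 0)) (nhds (Y τ)) := by
      intro τ hτ
      have c1 : Filter.Tendsto (fun ε : ℝ => Y τ - A' * ε - A * ε) (nhdsWithin 0 (Ioi 0)) (nhds (Y τ)) := by
        have : Continuous (fun ε : ℝ => Y τ - A' * ε - A * ε) := by fun_prop
        simpa using (this.tendsto 0).mono_left nhdsWithin_le_nhds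
      have c2 : Filter.Tendsto (fun ε : ℝ => Y τ - A * ε) (nhdsWithin 0 (Ioi 0)) (nhds (Y τ)) := by
        have : Continuous (fun ε : ℝ => Y τ - A * ε) := by fun_prop
        simpa using (this.tendsto 0).mono_left nhdsWithin_le_nhds
      refine tendsto_of_tendsto_of_tendsto_of_le_of_le' c1 c2 ?_ ?_
      · filter_upwards [self_mem_nhdsWithin] with ε hε
        linarith [hlow ε hε τ hτ]
      · filter_upwards [self_mem_nhdsWithin] with ε hε
        linarith [hup ε hε τ hτ]
    have l1 := (lim t htI).rpow_const (p := 1-γ) (Or.inr (by linarith))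
    have l2 := (lim s hsI).rpow_const (p := 1-γ) (Or.inr (by linarith))
    refine le_of_tendsto (l1.sub l2) ?_
    filter_upwards [self_mem_nhdsWithin, (lim t htI).eventually (lt_mem_nhds (hYpos t htI))] with ε hε h
    exact hode ε hε (by linarith)
  -- extension to the closed interval
  have hZc : ContinuousOn (fun t => (Y t)^(1-γ) + (1-γ) * (k0 * P) * t) (Icc 0 T) := by
    refine ContinuousOn.add (hYc.rpow_const fun x _ => Or.inr (by linarith)) (by fun_prop)
  have hclosed : ∀ s t : ℝ, 0 ≤ s → s ≤ t → t ≤ T →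
      (Y t)^(1-γ) - (Y s)^(1-γ) ≤ -((1-γ) * (k0 * P) * (t - s)) := by
    intro s t hs hst htT
    rcases hst.eq_or_lt with h | h
    · subst h; simp
    have anti : ∀ s' ∈ Ioo s t, ∀ t' ∈ Ioo s t, s' ≤ t' →
        (Y t')^(1-γ) + (1-γ) * (k0 * P) * t' ≤ (Y s')^(1-γ) + (1-γ) * (k0 * P) * s' := by
      intro s' hs' t' ht' h'
      have := hmain s' t' (hs.trans_lt hs'.1) h' (ht'.2.trans_le htT)
      linarith
    have hIsub : Ioo s t ⊆ Icc 0 T := fun x hx => ⟨hs.trans hx.1.le, hx.2.le.trans htT⟩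
    have cs := ((hZc s ⟨hs, hst.trans htT⟩).mono hIsub)
    have ct := ((hZc t ⟨hs.trans hst, htT⟩).mono hIsub)
    have ns : (nhdsWithin s (Ioo s t)).NeBot := left_nhdsWithin_Ioo_neBot h
    have nt : (nhdsWithin t (Ioo s t)).NeBot := right_nhdsWithin_Ioo_neBot h
    have step : ∀ s' ∈ Ioo s t, (Y t)^(1-γ) + (1-γ) * (k0 * P) * t ≤ (Y s')^(1-γ) + (1-γ) * (k0 * P) * s' := by
      intro s' hs'
      refine le_of_tendsto ct.tendsto ?_
      filter_upwards [self_mem_nhdsWithin, nhdsWithin_le_nhds (Ioi_mem_nhds hs'.2)] with t' ht' h'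
      exact anti s' hs' t' ht' (le_of_lt h')
    have : (Y t)^(1-γ) + (1-γ) * (k0 * P) * t ≤ (Y s)^(1-γ) + (1-γ) * (k0 * P) * s := by
      refine ge_of_tendsto cs.tendsto ?_
      filter_upwards [self_mem_nhdsWithin] with s' hs'
      exact step s' hs'
    linarith
  have hconv : ∀ t ∈ Icc 0 T, ((Y t) ^ (1/p)) ^ (1-m) = (Y t) ^ (1-γ) := by
    intro t ht
    rw [← Real.rpow_mul (hYnn t ht), hγ1]; congr 1; ring
  have hfin : ∀ s t : ℝ, 0 ≤ s → s ≤ t → t ≤ T →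
      ((Y t) ^ (1 / p)) ^ (1 - m) - ((Y s) ^ (1 / p)) ^ (1 - m) ≤ -((1-m)/p * k0 * P * (t - s)) := by
    intro s t hs hst htT
    rw [hconv t ⟨hs.trans hst, htT⟩, hconv s ⟨hs, hst.trans htT⟩]
    have := hclosed s t hs hst htT
    rw [hγ1] at this ⊢
    linarith
  refine ⟨hfin, ?_⟩
  have h0 : ∫ x in ball x₀ ρ, u₀ x ^ p = Y 0 := by
    refine setIntegral_congr_fun measurableSet_ball fun x hx => ?_
    simp only [hinit x hx]
  have hT0 : Y T = 0 := by
    have : ∀ x ∈ ball x₀ ρ, u T x ^ p = 0 := fun x hx => by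
      rw [hTz x (ball_subset_closedBall hx), Real.zero_rpow hp0.ne']
    rw [hY]
    simp only
    rw [setIntegral_congr_fun (g := fun _ => (0:ℝ)) measurableSet_ball this]; simp
  have := hfin 0 T le_rfl hT.le le_rfl
  rw [hT0, Real.zero_rpow (by positivity), Real.zero_rpow h1m.ne'] at this
  rw [h0, inv_mul_eq_div, le_div_iff₀ (by positivity)]
  linarith
end

section
/- (Theorem 3.2: evolution of local L^p norms.) Let d ≥ 1, m < 1 with m ≠ 0, and let p ≥ 1 satisfy p > 1 − m. There exists a positive constant c depending only on m and d such that the following holds. Let u be a classical solution of the FDE ∂ₜu = Δ(u^m)/m on (0,T) × Ω, let x₀ ∈ Ω and 0 < R < R₀ with B_{R₀}(x₀) ⊆ Ω, and assume u(t,·) ∈ L^p(B_{R₀}(x₀)) for all 0 < t < T. Then for all 0 < s ≤ t < T: ( ∫_{B_R(x₀)} u(t,x)^p dx )^{(1−m)/p} ≤ ( ∫_{B_{R₀}(x₀)} u(s,x)^p dx )^{(1−m)/p} + K (t − s), where K = p · c · (R₀ − R)^{−2} · |B_{R₀}(x₀) \ B_R(x₀)|^{(1−m)/p}. -/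
open MeasureTheory Metric Set Real

section helpers

variable {d : ℕ}

/-- directional derivative -/
noncomputable def dvX (e : EuclideanSpace ℝ (Fin d)) (f : EuclideanSpace ℝ (Fin d) → ℝ) :
    EuclideanSpace ℝ (Fin d) → ℝ := fun y => fderiv ℝ f y e

lemma dvX_contDiff (e : EuclideanSpace ℝ (Fin d)) {f : EuclideanSpace ℝ (Fin d) → ℝ}
    (hf : ContDiff ℝ (⊤ : ℕ∞) f) : ContDiff ℝ (⊤ : ℕ∞) (dvX e f) := by
  unfold dvX
  exact (hf.fderiv_right (m := ((⊤ : ℕ∞) : WithTop ℕ∞)) (by exact_mod_cast le_top)).clm_apply contDiff_const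

lemma dvX_line (e : EuclideanSpace ℝ (Fin d)) {f : EuclideanSpace ℝ (Fin d) → ℝ}
    (hf : ContDiff ℝ (⊤ : ℕ∞) f) (x : EuclideanSpace ℝ (Fin d)) :
    HasDerivAt (fun t : ℝ => f (x + t • e)) (dvX e f x) 0 :=
  ((hf.differentiable (by simp)) x).hasFDerivAt.hasLineDerivAt e

lemma dvX_eq_of_line (e : EuclideanSpace ℝ (Fin d)) {f : EuclideanSpace ℝ (Fin d) → ℝ}
    (hf : ContDiff ℝ (⊤ : ℕ∞) f) (x : EuclideanSpace ℝ (Fin d)) {a : ℝ}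
    (h : HasDerivAt (fun t : ℝ => f (x + t • e)) a 0) : dvX e f x = a :=
  (dvX_line e hf x).unique h

lemma integral_line_zero (e : EuclideanSpace ℝ (Fin d)) {G G' : EuclideanSpace ℝ (Fin d) → ℝ}
    (hG : Integrable G) (hG' : Integrable G')
    (h : ∀ x, HasDerivAt (fun t : ℝ => G (x + t • e)) (G' x) 0) : ∫ x, G' x = 0 := by
  have := integral_bilinear_hasLineDerivAt_right_eq_neg_left_of_integrable (μ := volume)
    (f := fun _ : EuclideanSpace ℝ (Fin d) => (1:ℝ)) (f' := fun _ => 0) (g := G) (g' := G') (v := e)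
    (B := ContinuousLinearMap.mul ℝ ℝ) (by simp) (by simpa using hG') (by simpa using hG)
    (fun x _ => hasDerivAt_const _ _) (fun x _ => h x)
  simpa using this

lemma dvX_rpow (e : EuclideanSpace ℝ (Fin d)) {U : EuclideanSpace ℝ (Fin d) → ℝ}
    (hU : ContDiff ℝ (⊤ : ℕ∞) U) (hpos : ∀ x, 0 < U x) (m : ℝ) :
    dvX e (fun y => U y ^ m) = fun x => m * (U x ^ (m - 1) * dvX e U x) := by
  funext x
  refine dvX_eq_of_line e (hU.rpow_const_of_ne fun x => (hpos x).ne') x ?_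
  have h := (dvX_line e hU x).rpow_const (p := m) (Or.inl (by simpa using (hpos x).ne'))
  convert h using 1
  simp; ring

lemma dvX_dvX_rpow (e : EuclideanSpace ℝ (Fin d)) {U : EuclideanSpace ℝ (Fin d) → ℝ}
    (hU : ContDiff ℝ (⊤ : ℕ∞) U) (hpos : ∀ x, 0 < U x) (m : ℝ) (x : EuclideanSpace ℝ (Fin d)) :
    dvX e (dvX e (fun y => U y ^ m)) x =
      m * ((m - 1) * U x ^ (m - 2) * dvX e U x ^ 2 + U x ^ (m - 1) * dvX e (dvX e U) x) := by
  rw [dvX_rpow e hU hpos]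
  refine dvX_eq_of_line e (contDiff_const.mul ((hU.rpow_const_of_ne fun x => (hpos x).ne').mul
    (dvX_contDiff e hU))) x ?_
  have h := (dvX_line e hU x).rpow_const (p := m - 1) (Or.inl (by simpa using (hpos x).ne'))
  have h2 := (h.fun_mul (dvX_line e (dvX_contDiff e hU) x)).const_mul m
  refine h2.congr_deriv ?_
  simp only [zero_smul, add_zero]
  rw [show m - 1 - 1 = m - 2 by ring]; ring

/-- continuous times cutoff is integrable -/
lemma int_cut {ψ f : EuclideanSpace ℝ (Fin d) → ℝ} (hψ : Continuous ψ) (hc : HasCompactSupport ψ)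
    (hf : Continuous f) : Integrable (fun x => ψ x * f x) :=
  (hψ.mul hf).integrable_of_hasCompactSupport hc.mul_right

lemma ibp_coord (e : EuclideanSpace ℝ (Fin d)) {U ψ : EuclideanSpace ℝ (Fin d) → ℝ}
    (hU : ContDiff ℝ (⊤ : ℕ∞) U) (hpos : ∀ x, 0 < U x)
    (hψ : ContDiff ℝ (⊤ : ℕ∞) ψ) (hc : HasCompactSupport ψ) (hψ0 : ∀ x, 0 ≤ ψ x)
    (m p lam mu : ℝ) (hm : m ≠ 0) (n : ℕ) (hn : 1 ≤ n)
    (hq : ∀ a b : ℝ, 0 ≤ (p - 1) * a ^ 2 + (1 - lam * (p + m - 1)) * a * b + mu * b ^ 2) :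
    ∫ x, ψ x ^ (n + 2) * U x ^ (p - 1) * (dvX e (dvX e (fun y => U y ^ m)) x / m) ≤
    ∫ x, U x ^ (p + m - 1) * ψ x ^ n * (mu * (n + 2) ^ 2 * dvX e ψ x ^ 2 +
      lam * ((n + 2) * ψ x * dvX e (dvX e ψ) x + (n + 2) * (n + 1) * dvX e ψ x ^ 2)) := by
  have hne : ∀ x, U x ≠ 0 := fun x => (hpos x).ne'
  have cU : Continuous U := hU.continuous
  have cUr : ∀ r : ℝ, Continuous (fun x => U x ^ r) := fun r => (hU.rpow_const_of_ne hne).continuous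
  have cU1 : Continuous (dvX e U) := (dvX_contDiff e hU).continuous
  have cU2 : Continuous (dvX e (dvX e U)) := (dvX_contDiff e (dvX_contDiff e hU)).continuous
  have cp : Continuous ψ := hψ.continuous
  have cp1 : Continuous (dvX e ψ) := (dvX_contDiff e hψ).continuous
  have cp2 : Continuous (dvX e (dvX e ψ)) := (dvX_contDiff e (dvX_contDiff e hψ)).continuous
  obtain ⟨j, rfl⟩ : ∃ j, n = j + 1 := ⟨n - 1, by omega⟩
  set n := j + 1 with hnj
  set G : EuclideanSpace ℝ (Fin d) → ℝ := fun x =>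
    ψ x ^ (n + 2) * (U x ^ (p + m - 2) * dvX e U x)
      - lam * (n + 2) * (U x ^ (p + m - 1) * (ψ x ^ (n + 1) * dvX e ψ x)) with hG
  set G' : EuclideanSpace ℝ (Fin d) → ℝ := fun x =>
    (n + 2) * ψ x ^ (n + 1) * dvX e ψ x * (U x ^ (p + m - 2) * dvX e U x)
     + ψ x ^ (n + 2) * ((p + m - 2) * U x ^ (p + m - 3) * dvX e U x ^ 2
        + U x ^ (p + m - 2) * dvX e (dvX e U) x)
      - lam * (n + 2) * ((p + m - 1) * U x ^ (p + m - 2) * dvX e U x * (ψ x ^ (n + 1) * dvX e ψ x)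
        + U x ^ (p + m - 1) * ((n + 1) * ψ x ^ n * dvX e ψ x ^ 2 + ψ x ^ (n + 1) * dvX e (dvX e ψ) x))
    with hG'
  have iG : Integrable G := by
    have := int_cut cp hc (f := fun x => ψ x ^ (n + 1) * (U x ^ (p + m - 2) * dvX e U x)
      - lam * (n + 2) * (U x ^ (p + m - 1) * (ψ x ^ n * dvX e ψ x))) (by
        have := cUr (p + m - 2); have := cUr (p + m - 1); fun_prop)
    refine this.congr (Filter.Eventually.of_forall fun x => ?_)
    simp only [hG]; ring
  have iG' : Integrable G' := by
    have := int_cut cp hc (f := fun x =>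
      (n + 2) * ψ x ^ n * dvX e ψ x * (U x ^ (p + m - 2) * dvX e U x)
     + ψ x ^ (n + 1) * ((p + m - 2) * U x ^ (p + m - 3) * dvX e U x ^ 2
        + U x ^ (p + m - 2) * dvX e (dvX e U) x)
      - lam * (n + 2) * ((p + m - 1) * U x ^ (p + m - 2) * dvX e U x * (ψ x ^ n * dvX e ψ x)
        + U x ^ (p + m - 1) * ((n + 1) * ψ x ^ j * dvX e ψ x ^ 2 + ψ x ^ n * dvX e (dvX e ψ) x))) (by
        have := cUr (p + m - 2); have := cUr (p + m - 1); have := cUr (p + m - 3); fun_prop)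
    refine this.congr (Filter.Eventually.of_forall fun x => ?_)
    simp only [hG', hnj]; ring
  have dG : ∀ x, HasDerivAt (fun t : ℝ => G (x + t • e)) (G' x) 0 := by
    intro x
    have h0 : U (x + (0:ℝ) • e) ≠ 0 := hne _
    have a1 := (dvX_line e hU x).rpow_const (p := p + m - 2) (Or.inl h0)
    have a2 := (dvX_line e hU x).rpow_const (p := p + m - 1) (Or.inl h0)
    have b1 := (dvX_line e hψ x).fun_pow (n + 2)
    have b2 := (dvX_line e hψ x).fun_pow (n + 1)
    have c1 := dvX_line e (dvX_contDiff e hU) x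
    have c2 := dvX_line e (dvX_contDiff e hψ) x
    have := (b1.fun_mul (a1.fun_mul c1)).fun_sub ((a2.fun_mul (b2.fun_mul c2)).const_mul (lam * (n + 2)))
    refine HasDerivAt.congr_deriv this ?_
    simp only [hG', zero_smul, add_zero]
    rw [show p + m - 2 - 1 = p + m - 3 by ring, show p + m - 1 - 1 = p + m - 2 by ring]
    simp only [Nat.add_sub_cancel, show n + 2 - 1 = n + 1 by omega]
    push_cast
    ring
  have hz := integral_line_zero e iG iG' dG
  have iR : Integrable (fun x => U x ^ (p + m - 1) * ψ x ^ n * (mu * (n + 2) ^ 2 * dvX e ψ x ^ 2 +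
      lam * ((n + 2) * ψ x * dvX e (dvX e ψ) x + (n + 2) * (n + 1) * dvX e ψ x ^ 2))) := by
    have := int_cut cp hc (f := fun x => U x ^ (p + m - 1) * ψ x ^ j *
      (mu * (n + 2) ^ 2 * dvX e ψ x ^ 2 +
      lam * ((n + 2) * ψ x * dvX e (dvX e ψ) x + (n + 2) * (n + 1) * dvX e ψ x ^ 2))) (by
        have := cUr (p + m - 1); fun_prop)
    refine this.congr (Filter.Eventually.of_forall fun x => ?_)
    simp only [hnj]; ring
  have iL : Integrable (fun x => ψ x ^ (n + 2) * U x ^ (p - 1) *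
      (dvX e (dvX e (fun y => U y ^ m)) x / m)) := by
    have c3 : Continuous (dvX e (dvX e (fun y => U y ^ m))) :=
      (dvX_contDiff e (dvX_contDiff e (hU.rpow_const_of_ne hne))).continuous
    have := int_cut cp hc (f := fun x => ψ x ^ (n + 1) * U x ^ (p - 1) *
      (dvX e (dvX e (fun y => U y ^ m)) x / m)) (by
        have := cUr (p - 1); fun_prop)
    refine this.congr (Filter.Eventually.of_forall fun x => ?_)
    simp only []; ring
  have : ∫ x, ψ x ^ (n + 2) * U x ^ (p - 1) * (dvX e (dvX e (fun y => U y ^ m)) x / m) ≤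
    ∫ x, (G' x + U x ^ (p + m - 1) * ψ x ^ n * (mu * (n + 2) ^ 2 * dvX e ψ x ^ 2 +
      lam * ((n + 2) * ψ x * dvX e (dvX e ψ) x + (n + 2) * (n + 1) * dvX e ψ x ^ 2))) := by
    refine integral_mono iL (iG'.add iR) fun x => ?_
    simp only [dvX_dvX_rpow e hU hpos, hG']
    have hU0 := hpos x
    have e1 : U x ^ (p + m - 2) = U x ^ (p + m - 3) * U x := by
      rw [← rpow_add_one hU0.ne']; congr 1; ring
    have e2 : U x ^ (p + m - 1) = U x ^ (p + m - 3) * U x * U x := by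
      rw [← rpow_add_one hU0.ne', ← rpow_add_one hU0.ne']; congr 1; ring
    have e3 : U x ^ (p - 1) * U x ^ (m - 2) = U x ^ (p + m - 3) := by
      rw [← rpow_add hU0]; congr 1; ring
    have e4 : U x ^ (p - 1) * U x ^ (m - 1) = U x ^ (p + m - 3) * U x := by
      rw [← e1, ← rpow_add hU0]; congr 1; ring
    have L : ψ x ^ (n + 2) * U x ^ (p - 1) * (m * ((m - 1) * U x ^ (m - 2) * dvX e U x ^ 2
        + U x ^ (m - 1) * dvX e (dvX e U) x) / m) =
        ψ x ^ (n + 2) * ((m - 1) * U x ^ (p + m - 3) * dvX e U x ^ 2 +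
          U x ^ (p + m - 3) * U x * dvX e (dvX e U) x) := by
      rw [mul_div_cancel_left₀ _ hm, ← e4, ← e3]; ring
    rw [L, e1, e2, ← sub_nonneg]
    have hz0 : 0 ≤ U x ^ (p + m - 3) * ψ x ^ n :=
      mul_nonneg (rpow_nonneg hU0.le _) (pow_nonneg (hψ0 x) _)
    have := mul_nonneg hz0 (hq (ψ x * dvX e U x) ((n + 2) * U x * dvX e ψ x))
    refine this.trans_eq ?_
    ring
  rw [integral_add iG' iR, hz, zero_add] at this
  exact this

end helpers

section cutoff

lemma smoothTransition_bounds : ∃ N : ℝ, 0 ≤ N ∧ (∀ y, |deriv Real.smoothTransition y| ≤ N) ∧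
    (∀ y, |deriv (deriv Real.smoothTransition) y| ≤ N) ∧
    (∀ y < 0, deriv Real.smoothTransition y = 0 ∧ deriv (deriv Real.smoothTransition) y = 0) := by
  have hs : ContDiff ℝ (⊤ : ℕ∞) Real.smoothTransition := Real.smoothTransition.contDiff
  have h1 : ContDiff ℝ (⊤ : ℕ∞) (deriv Real.smoothTransition) :=
    (contDiff_infty_iff_deriv.1 hs).2
  have h2 : ContDiff ℝ (⊤ : ℕ∞) (deriv (deriv Real.smoothTransition)) :=
    (contDiff_infty_iff_deriv.1 h1).2
  have z1 : ∀ y < 0, deriv Real.smoothTransition y = 0 := by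
    intro y hy
    have : Real.smoothTransition =ᶠ[nhds y] fun _ => (0:ℝ) := by
      filter_upwards [Iio_mem_nhds hy] with z hz
      exact Real.smoothTransition.zero_of_nonpos (le_of_lt hz)
    rw [this.deriv_eq]; simp
  have z2 : ∀ y < 0, deriv (deriv Real.smoothTransition) y = 0 := by
    intro y hy
    have : deriv Real.smoothTransition =ᶠ[nhds y] fun _ => (0:ℝ) := by
      filter_upwards [Iio_mem_nhds hy] with z hz
      exact z1 z hz
    rw [this.deriv_eq]; simp
  have o1 : ∀ y > 1, deriv Real.smoothTransition y = 0 := by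
    intro y hy
    have : Real.smoothTransition =ᶠ[nhds y] fun _ => (1:ℝ) := by
      filter_upwards [Ioi_mem_nhds hy] with z hz
      exact Real.smoothTransition.one_of_one_le (le_of_lt hz)
    rw [this.deriv_eq]; simp
  have o2 : ∀ y > 1, deriv (deriv Real.smoothTransition) y = 0 := by
    intro y hy
    have : deriv Real.smoothTransition =ᶠ[nhds y] fun _ => (0:ℝ) := by
      filter_upwards [Ioi_mem_nhds hy] with z hz
      exact o1 z hz
    rw [this.deriv_eq]; simp
  obtain ⟨A, hA⟩ := (isCompact_Icc (a := (0:ℝ)) (b := 1)).exists_bound_of_continuousOn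
    h1.continuous.continuousOn
  obtain ⟨B, hB⟩ := (isCompact_Icc (a := (0:ℝ)) (b := 1)).exists_bound_of_continuousOn
    h2.continuous.continuousOn
  have hA0 : 0 ≤ A := (norm_nonneg _).trans (hA 0 (by simp))
  have hB0 : 0 ≤ B := (norm_nonneg _).trans (hB 0 (by simp))
  refine ⟨A + B, by positivity, fun y => ?_, fun y => ?_, fun y hy => ⟨z1 y hy, z2 y hy⟩⟩
  · rcases lt_or_ge y 0 with h | h
    · rw [z1 y h]; simp; positivity
    rcases lt_or_ge 1 y with h' | h'
    · rw [o1 y h']; simp; positivity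
    have := hA y ⟨h, h'⟩
    rw [Real.norm_eq_abs] at this; linarith
  · rcases lt_or_ge y 0 with h | h
    · rw [z2 y h]; simp; positivity
    rcases lt_or_ge 1 y with h' | h'
    · rw [o2 y h']; simp; positivity
    have := hB y ⟨h, h'⟩
    rw [Real.norm_eq_abs] at this; linarith

lemma exists_cutoff (d : ℕ) : ∃ M : ℝ, 0 < M ∧
    ∀ (x₀ : EuclideanSpace ℝ (Fin d)) (R R₀ : ℝ), 0 < R → R < R₀ →
    ∃ ψ : EuclideanSpace ℝ (Fin d) → ℝ, ContDiff ℝ (⊤ : ℕ∞) ψ ∧ (∀ x, 0 ≤ ψ x) ∧ (∀ x, ψ x ≤ 1) ∧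
      (∀ x ∈ ball x₀ R, ψ x = 1) ∧ (∀ x, x ∉ ball x₀ ((R + R₀) / 2) → ψ x = 0) ∧
      ∀ e : EuclideanSpace ℝ (Fin d), ‖e‖ = 1 → ∀ x,
        dvX e ψ x ^ 2 ≤ M / (R₀ - R) ^ 2 ∧ |dvX e (dvX e ψ) x| ≤ M / (R₀ - R) ^ 2 := by
  obtain ⟨N, hN, hN1, hN2, hN0⟩ := smoothTransition_bounds
  refine ⟨16 * N ^ 2 + 24 * N + 1, by positivity, fun x₀ R R₀ hR hRR => ?_⟩
  set R₁ := (R + R₀) / 2 with hR1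
  have hδ : 0 < R₀ - R := by linarith
  have hlt : R < R₁ := by rw [hR1]; linarith
  set w := R₁ ^ 2 - R ^ 2 with hw
  have hw1 : (R₁ - R) * R₁ ≤ w := by rw [hw]; nlinarith
  have hw2 : (R₁ - R) ^ 2 ≤ w := by rw [hw]; nlinarith
  have hw0 : 0 < w := lt_of_lt_of_le (by have : 0 < R₁ - R := by linarith
                                         positivity) hw2
  set q : EuclideanSpace ℝ (Fin d) → ℝ := fun x => (R₁ ^ 2 - ‖x - x₀‖ ^ 2) / w with hq
  have cq : ContDiff ℝ (⊤ : ℕ∞) q :=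
    (contDiff_const.sub ((contDiff_id.sub contDiff_const).norm_sq ℝ)).div_const _
  have hs : ContDiff ℝ (⊤ : ℕ∞) Real.smoothTransition := Real.smoothTransition.contDiff
  have hs1 : ContDiff ℝ (⊤ : ℕ∞) (deriv Real.smoothTransition) :=
    (contDiff_infty_iff_deriv.1 hs).2
  have cψ : ContDiff ℝ (⊤ : ℕ∞) (fun x => Real.smoothTransition (q x)) := hs.comp cq
  refine ⟨fun x => Real.smoothTransition (q x), cψ, fun x => Real.smoothTransition.nonneg _,
    fun x => Real.smoothTransition.le_one _, fun x hx => ?_, fun x hx => ?_, fun e he => ?_⟩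
  · apply Real.smoothTransition.one_of_one_le
    rw [mem_ball, dist_eq_norm] at hx
    simp only [hq]
    rw [le_div_iff₀ hw0, hw]
    nlinarith [norm_nonneg (x - x₀)]
  · apply Real.smoothTransition.zero_of_nonpos
    rw [mem_ball, dist_eq_norm, not_lt] at hx
    simp only [hq]
    apply div_nonpos_of_nonpos_of_nonneg _ hw0.le
    nlinarith [norm_nonneg (x - x₀)]
  have lin : ∀ x, HasDerivAt (fun t : ℝ => inner ℝ (x + t • e - x₀) e) 1 0 := by
    intro x
    have : (fun t : ℝ => inner ℝ (x + t • e - x₀) e) = fun t : ℝ => inner ℝ (x - x₀) e + t := by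
      funext t
      rw [show x + t • e - x₀ = (x - x₀) + t • e by abel, inner_add_left, inner_smul_left,
        real_inner_self_eq_norm_sq, he]
      simp
    rw [this]
    exact (hasDerivAt_id (0:ℝ)).const_add _
  have dq : ∀ x, HasDerivAt (fun t : ℝ => q (x + t • e)) (-2 * inner ℝ (x - x₀) e / w) 0 := by
    intro x
    have : (fun t : ℝ => q (x + t • e)) = fun t : ℝ =>
        (R₁ ^ 2 - (‖x - x₀‖ ^ 2 + 2 * (t * inner ℝ (x - x₀) e) + t ^ 2)) / w := by
      funext t
      simp only [hq]
      rw [show x + t • e - x₀ = (x - x₀) + t • e by abel, norm_add_sq_real, inner_smul_right,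
        norm_smul, he]
      simp
    rw [this]
    have h := ((((((hasDerivAt_id (0:ℝ)).mul_const (inner ℝ (x - x₀) e)).const_mul 2).const_add
      (‖x - x₀‖ ^ 2)).fun_add ((hasDerivAt_id (0:ℝ)).fun_pow 2)).const_sub (R₁ ^ 2)).div_const w
    refine h.congr_deriv ?_
    simp
  have d1 : dvX e (fun x => Real.smoothTransition (q x)) =
      fun x => deriv Real.smoothTransition (q x) * (-2 * inner ℝ (x - x₀) e / w) := by
    funext x
    refine dvX_eq_of_line e cψ x ?_
    have h := ((hs.differentiable (by simp)) (q (x + (0:ℝ) • e))).hasDerivAt.comp (0:ℝ) (dq x)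
    exact HasDerivAt.congr_deriv h (by simp)
  have d2 : ∀ x, dvX e (dvX e (fun x => Real.smoothTransition (q x))) x =
      deriv (deriv Real.smoothTransition) (q x) * (-2 * inner ℝ (x - x₀) e / w) ^ 2
        + deriv Real.smoothTransition (q x) * (-2 / w) := by
    intro x
    refine dvX_eq_of_line e (dvX_contDiff e cψ) x ?_
    rw [d1]
    have h := ((hs1.differentiable (by simp)) (q (x + (0:ℝ) • e))).hasDerivAt.comp (0:ℝ) (dq x)
    have h2 := h.fun_mul (((lin x).const_mul (-2)).div_const w)
    refine HasDerivAt.congr_deriv h2 ?_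
    simp; ring
  intro x
  rw [d2, d1]
  simp only
  have hM : 0 < (R₀ - R) ^ 2 := by positivity
  rcases lt_or_ge (q x) 0 with h | h
  · rw [(hN0 _ h).1, (hN0 _ h).2]
    simp
    positivity
  have hx : ‖x - x₀‖ ≤ R₁ := by
    simp only [hq] at h
    rw [le_div_iff₀ hw0, zero_mul] at h
    nlinarith [norm_nonneg (x - x₀)]
  have hin : |inner ℝ (x - x₀) e| ≤ R₁ := by
    have := abs_real_inner_le_norm (x - x₀) e
    rw [he, mul_one] at this; linarith
  have hδ1 : R₁ - R = (R₀ - R) / 2 := by rw [hR1]; ring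
  have b1 : |(-2 * inner ℝ (x - x₀) e / w)| ≤ 4 / (R₀ - R) := by
    rw [abs_div, abs_mul, abs_of_pos hw0, div_le_div_iff₀ hw0 hδ]
    rw [hδ1] at hw1
    norm_num
    nlinarith
  have b2 : (-2 * inner ℝ (x - x₀) e / w) ^ 2 ≤ 16 / (R₀ - R) ^ 2 := by
    rw [← sq_abs]
    refine (pow_le_pow_left₀ (abs_nonneg _) b1 2).trans_eq ?_
    rw [div_pow]; norm_num
  have b3 : |(-2 / w)| ≤ 8 / (R₀ - R) ^ 2 := by
    rw [abs_div, abs_of_pos hw0, div_le_div_iff₀ hw0 hM]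
    rw [hδ1] at hw2
    norm_num
    nlinarith
  constructor
  · rw [mul_pow]
    have : deriv Real.smoothTransition (q x) ^ 2 ≤ N ^ 2 := by
      rw [← sq_abs]; exact pow_le_pow_left₀ (abs_nonneg _) (hN1 _) 2
    calc _ ≤ N ^ 2 * (16 / (R₀ - R) ^ 2) := by gcongr
      _ ≤ _ := by
        rw [← mul_div_assoc]; gcongr; linarith
  · calc _ ≤ |deriv (deriv Real.smoothTransition) (q x) * (-2 * inner ℝ (x - x₀) e / w) ^ 2|
        + |deriv Real.smoothTransition (q x) * (-2 / w)| := abs_add_le _ _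
      _ = |deriv (deriv Real.smoothTransition) (q x)| * (-2 * inner ℝ (x - x₀) e / w) ^ 2
        + |deriv Real.smoothTransition (q x)| * |(-2 / w)| := by
          rw [abs_mul, abs_mul, abs_of_nonneg (sq_nonneg (-2 * inner ℝ (x - x₀) e / w))]
      _ ≤ N * (16 / (R₀ - R) ^ 2) + N * (8 / (R₀ - R) ^ 2) := by
          gcongr
          · exact hN2 _
          · exact hN1 _
      _ = (24 * N) / (R₀ - R) ^ 2 := by ring
      _ ≤ _ := by gcongr; nlinarith [sq_nonneg N]

end cutoff

section spatial

variable {d : ℕ}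

lemma holder_set {w : EuclideanSpace ℝ (Fin d) → ℝ} (hw : Continuous w) (hc : HasCompactSupport w)
    (h0 : ∀ x, 0 ≤ w x) (A : Set (EuclideanSpace ℝ (Fin d))) (hA : volume A ≠ ⊤)
    (β : ℝ) (hβ0 : 0 < β) (hβ1 : β < 1) :
    ∫ x in A, w x ^ (1 - β) ≤ (volume A).toReal ^ β * (∫ x, w x) ^ (1 - β) := by
  have hb : 0 < 1 - β := by linarith
  have hconj : (1 / (1 - β)).HolderConjugate (1 / β) := by
    rw [Real.holderConjugate_iff]
    constructor
    · rw [lt_div_iff₀ hb]; linarith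
    · simp
  have hf : MemLp (fun x => w x ^ (1 - β)) (ENNReal.ofReal (1 / (1 - β))) (volume.restrict A) := by
    refine MemLp.restrict A (Continuous.memLp_of_hasCompactSupport
      (hw.rpow_const fun x => Or.inr hb.le) ?_)
    exact hc.comp_left (g := fun y : ℝ => y ^ (1 - β)) (Real.zero_rpow hb.ne')
  have : IsFiniteMeasure (volume.restrict A) := ⟨by simpa using hA.lt_top⟩
  have hg : MemLp (fun _ : EuclideanSpace ℝ (Fin d) => (1:ℝ)) (ENNReal.ofReal (1 / β))
    (volume.restrict A) := memLp_const _
  have H := integral_mul_le_Lp_mul_Lq_of_nonneg hconj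
    (Filter.Eventually.of_forall fun x => rpow_nonneg (h0 x) _)
    (Filter.Eventually.of_forall fun x => zero_le_one) hf hg
  have e1 : ∀ x, (w x ^ (1 - β)) ^ (1 / (1 - β)) = w x := fun x => by
    rw [← rpow_mul (h0 x), mul_one_div_cancel hb.ne', rpow_one]
  simp only [mul_one, e1, one_rpow, one_div_one_div] at H
  rw [mul_comm] at H
  refine H.trans ?_
  have : ∫ x in A, (1:ℝ) = (volume A).toReal := by simp [Measure.real]
  rw [this]
  gcongr
  · exact integral_nonneg fun x => h0 x
  · exact Filter.Eventually.of_forall h0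
  · exact hw.integrable_of_hasCompactSupport hc
  · exact Measure.restrict_le_self

lemma spat {U ψ : EuclideanSpace ℝ (Fin d) → ℝ}
    (hU : ContDiff ℝ (⊤ : ℕ∞) U) (hpos : ∀ x, 0 < U x)
    (hψ : ContDiff ℝ (⊤ : ℕ∞) ψ) (hc : HasCompactSupport ψ) (hψ0 : ∀ x, 0 ≤ ψ x) (hψ1 : ∀ x, ψ x ≤ 1)
    (x₀ : EuclideanSpace ℝ (Fin d)) (R R₀ : ℝ)
    (hin : ∀ x ∈ ball x₀ R, ψ x = 1) (hout : ∀ x, x ∉ ball x₀ R₀ → ψ x = 0)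
    (D : ℝ) (hD : ∀ e : EuclideanSpace ℝ (Fin d), ‖e‖ = 1 → ∀ x,
        dvX e ψ x ^ 2 ≤ D ∧ |dvX e (dvX e ψ) x| ≤ D)
    (m p lam mu β : ℝ) (hm : m ≠ 0) (n : ℕ) (hn : 1 ≤ n) (hlam : 0 ≤ lam) (hmu : 0 ≤ mu)
    (hβ0 : 0 < β) (hβ1 : β < 1) (hβ : p * (1 - β) = p + m - 1) (hk : 2 ≤ ((n:ℝ) + 2) * β)
    (hq : ∀ a b : ℝ, 0 ≤ (p - 1) * a ^ 2 + (1 - lam * (p + m - 1)) * a * b + mu * b ^ 2) :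
    ∫ x, ψ x ^ (n + 2) * U x ^ (p - 1) * (spaceLap (fun y => U y ^ m) x / m) ≤
    d * (((mu + lam) * (n + 2) ^ 2 * D) * ((volume (ball x₀ R₀ \ ball x₀ R)).toReal ^ β *
      (∫ x, ψ x ^ (n + 2) * U x ^ p) ^ (1 - β))) := by
  have hne : ∀ x, U x ≠ 0 := fun x => (hpos x).ne'
  have cUr : ∀ r : ℝ, Continuous (fun x => U x ^ r) := fun r => (hU.rpow_const_of_ne hne).continuous
  have cp : Continuous ψ := hψ.continuous
  set A := ball x₀ R₀ \ ball x₀ R with hA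
  set C := (mu + lam) * ((n:ℝ) + 2) ^ 2 * D with hC
  set w : EuclideanSpace ℝ (Fin d) → ℝ := fun x => ψ x ^ (n + 2) * U x ^ p with hw
  have cw : Continuous w := (cp.pow _).mul (cUr p)
  have hcw : HasCompactSupport w := by
    have : HasCompactSupport (fun x => ψ x ^ (n + 2)) :=
      hc.comp_left (g := fun y : ℝ => y ^ (n + 2)) (by simp)
    exact this.mul_right
  have w0 : ∀ x, 0 ≤ w x := fun x => mul_nonneg (pow_nonneg (hψ0 x) _) (rpow_nonneg (hpos x).le _)
  have mA : MeasurableSet A := measurableSet_ball.diff measurableSet_ball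
  have hfin : volume A ≠ ⊤ := (measure_mono sdiff_subset |>.trans_lt measure_ball_lt_top).ne
  have hb : 0 < 1 - β := by linarith
  have iw : IntegrableOn (fun x => w x ^ (1 - β)) A := by
    refine (Continuous.integrable_of_hasCompactSupport
      (cw.rpow_const fun x => Or.inr hb.le) ?_).integrableOn
    exact hcw.comp_left (g := fun y : ℝ => y ^ (1 - β)) (Real.zero_rpow hb.ne')
  have H := holder_set cw hcw w0 A hfin β hβ0 hβ1
  have key : ∀ i : Fin d, ∫ x, ψ x ^ (n + 2) * U x ^ (p - 1) *
      (dvX (EuclideanSpace.single i 1) (dvX (EuclideanSpace.single i 1) (fun y => U y ^ m)) x / m)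
      ≤ C * ((volume A).toReal ^ β * (∫ x, w x) ^ (1 - β)) := by
    intro i
    set e : EuclideanSpace ℝ (Fin d) := EuclideanSpace.single i 1 with he
    have hen : ‖e‖ = 1 := by simp [he]
    have hD0 : 0 ≤ D := (sq_nonneg _).trans (hD e hen x₀).1
    have hC0 : 0 ≤ C := by rw [hC]; positivity
    have cp1 : Continuous (dvX e ψ) := (dvX_contDiff e hψ).continuous
    have cp2 : Continuous (dvX e (dvX e ψ)) := (dvX_contDiff e (dvX_contDiff e hψ)).continuous
    refine (ibp_coord e hU hpos hψ hc hψ0 m p lam mu hm n hn hq).trans ?_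
    have iR : Integrable (fun x => U x ^ (p + m - 1) * ψ x ^ n * (mu * (n + 2) ^ 2 * dvX e ψ x ^ 2 +
      lam * ((n + 2) * ψ x * dvX e (dvX e ψ) x + (n + 2) * (n + 1) * dvX e ψ x ^ 2))) := by
      have := int_cut cp hc (f := fun x => U x ^ (p + m - 1) * ψ x ^ (n - 1) *
        (mu * (n + 2) ^ 2 * dvX e ψ x ^ 2 +
        lam * ((n + 2) * ψ x * dvX e (dvX e ψ) x + (n + 2) * (n + 1) * dvX e ψ x ^ 2))) (by
          have := cUr (p + m - 1); fun_prop)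
      refine this.congr (Filter.Eventually.of_forall fun x => ?_)
      obtain ⟨j, rfl⟩ : ∃ j, n = j + 1 := ⟨n - 1, by omega⟩
      simp only [Nat.add_sub_cancel]; ring
    have step : ∫ x, U x ^ (p + m - 1) * ψ x ^ n * (mu * (n + 2) ^ 2 * dvX e ψ x ^ 2 +
      lam * ((n + 2) * ψ x * dvX e (dvX e ψ) x + (n + 2) * (n + 1) * dvX e ψ x ^ 2)) ≤
      ∫ x, A.indicator (fun x => C * w x ^ (1 - β)) x := by
      refine integral_mono iR ((integrable_indicator_iff mA).2 (iw.const_mul C)) fun x => ?_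
      simp only
      by_cases hx0 : x ∈ ball x₀ R₀
      swap
      · rw [hout x hx0, indicator_of_notMem (fun h => hx0 h.1), zero_pow (by omega)]; simp
      by_cases hx1 : x ∈ ball x₀ R
      · rw [indicator_of_notMem (fun h => h.2 hx1)]
        have z1 : ∀ y ∈ ball x₀ R, dvX e ψ y = 0 := by
          intro y hy
          have : ψ =ᶠ[nhds y] fun _ => (1:ℝ) := by
            filter_upwards [isOpen_ball.mem_nhds hy] with z hz using hin z hz
          simp [dvX, this.fderiv_eq]
        have z2 : dvX e (dvX e ψ) x = 0 := by
          have : dvX e ψ =ᶠ[nhds x] fun _ => (0:ℝ) := by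
            filter_upwards [isOpen_ball.mem_nhds hx1] with z hz using z1 z hz
          rw [dvX, this.fderiv_eq]; simp
        rw [z2, z1 x hx1]; simp
      rw [indicator_of_mem (show x ∈ A from ⟨hx0, hx1⟩)]
      have hQ : mu * (n + 2) ^ 2 * dvX e ψ x ^ 2 +
        lam * ((n + 2) * ψ x * dvX e (dvX e ψ) x + (n + 2) * (n + 1) * dvX e ψ x ^ 2) ≤ C := by
        obtain ⟨h1, h2⟩ := hD e hen x
        have h3 : ψ x * dvX e (dvX e ψ) x ≤ D := by
          calc _ ≤ |ψ x * dvX e (dvX e ψ) x| := le_abs_self _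
            _ = ψ x * |dvX e (dvX e ψ) x| := by rw [abs_mul, abs_of_nonneg (hψ0 x)]
            _ ≤ 1 * D := mul_le_mul (hψ1 x) h2 (abs_nonneg _) zero_le_one
            _ = D := one_mul D
        calc _ = mu * (n + 2) ^ 2 * dvX e ψ x ^ 2 + lam * ((n + 2) * (ψ x * dvX e (dvX e ψ) x)
                + (n + 2) * (n + 1) * dvX e ψ x ^ 2) := by ring
          _ ≤ mu * (n + 2) ^ 2 * D + lam * ((n + 2) * D + (n + 2) * (n + 1) * D) := by gcongr
          _ = C := by rw [hC]; ring
      have hP : U x ^ (p + m - 1) * ψ x ^ n ≤ w x ^ (1 - β) := by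
        simp only [hw]
        rw [mul_rpow (pow_nonneg (hψ0 x) _) (rpow_nonneg (hpos x).le _), ← rpow_mul (hpos x).le, hβ,
          mul_comm]
        refine mul_le_mul_of_nonneg_right ?_ (rpow_nonneg (hpos x).le _)
        rcases (hψ0 x).eq_or_lt with h | h
        · rw [← h, zero_pow (by omega)]; positivity
        · rw [← rpow_natCast, ← rpow_natCast, ← rpow_mul (hψ0 x)]
          refine rpow_le_rpow_of_exponent_ge h (hψ1 x) ?_
          push_cast
          nlinarith
      calc _ ≤ U x ^ (p + m - 1) * ψ x ^ n * C :=
            mul_le_mul_of_nonneg_left hQ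
              (mul_nonneg (rpow_nonneg (hpos x).le _) (pow_nonneg (hψ0 x) _))
        _ ≤ w x ^ (1 - β) * C := mul_le_mul_of_nonneg_right hP hC0
        _ = _ := mul_comm _ _
    refine step.trans ?_
    rw [integral_indicator mA, integral_const_mul]
    exact mul_le_mul_of_nonneg_left H hC0
  have iL : ∀ i : Fin d, Integrable (fun x => ψ x ^ (n + 2) * U x ^ (p - 1) *
      (dvX (EuclideanSpace.single i 1) (dvX (EuclideanSpace.single i 1) (fun y => U y ^ m)) x / m)) := by
    intro i
    set e : EuclideanSpace ℝ (Fin d) := EuclideanSpace.single i 1 with he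
    have c3 : Continuous (dvX e (dvX e (fun y => U y ^ m))) :=
      (dvX_contDiff e (dvX_contDiff e (hU.rpow_const_of_ne hne))).continuous
    have := int_cut cp hc (f := fun x => ψ x ^ (n + 1) * U x ^ (p - 1) *
      (dvX e (dvX e (fun y => U y ^ m)) x / m)) (by
        have := cUr (p - 1); fun_prop)
    refine this.congr (Filter.Eventually.of_forall fun x => ?_)
    simp only []; ring
  have E : ∀ x, ψ x ^ (n + 2) * U x ^ (p - 1) * (spaceLap (fun y => U y ^ m) x / m) =
      ∑ i : Fin d, ψ x ^ (n + 2) * U x ^ (p - 1) *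
      (dvX (EuclideanSpace.single i 1) (dvX (EuclideanSpace.single i 1) (fun y => U y ^ m)) x / m) := by
    intro x
    rw [← Finset.mul_sum, ← Finset.sum_div]
    rfl
  simp only [E]
  rw [integral_finsetSum _ fun i _ => iL i]
  refine (Finset.sum_le_sum fun i _ => key i).trans_eq ?_
  simp

end spatial

section time

variable {d : ℕ}

lemma time_deriv {ψ : EuclideanSpace ℝ (Fin d) → ℝ} (hψ : Continuous ψ) (hc : HasCompactSupport ψ)
    {v : ℝ → EuclideanSpace ℝ (Fin d) → ℝ} {T : ℝ}
    (hv : ∀ t ∈ Ioo (0:ℝ) T, ∀ x, ContDiffAt ℝ (⊤ : ℕ∞)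
      (fun q : ℝ × EuclideanSpace ℝ (Fin d) => v q.1 q.2) (t, x))
    (hpos : ∀ t ∈ Ioo (0:ℝ) T, ∀ x, 0 < v t x) (p : ℝ) (k : ℕ) (hk : 1 ≤ k)
    {t₀ : ℝ} (ht₀ : t₀ ∈ Ioo (0:ℝ) T) :
    HasDerivAt (fun t => ∫ x, ψ x ^ k * v t x ^ p)
      (∫ x, ψ x ^ k * (deriv (fun s => v s x) t₀ * p * v t₀ x ^ (p - 1))) t₀ := by
  set V : ℝ × EuclideanSpace ℝ (Fin d) → ℝ := fun q => v q.1 q.2 with hV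
  have hO : IsOpen (Ioo (0:ℝ) T ×ˢ (univ : Set (EuclideanSpace ℝ (Fin d)))) :=
    isOpen_Ioo.prod isOpen_univ
  have hder : ∀ t ∈ Ioo (0:ℝ) T, ∀ x, HasDerivAt (fun s => v s x) (fderiv ℝ V (t, x) (1, 0)) t := by
    intro t ht x
    have h1 : HasFDerivAt V (fderiv ℝ V (t, x)) (t, x) :=
      ((hv t ht x).differentiableAt (by simp)).hasFDerivAt
    have h2 : HasDerivAt (fun s : ℝ => (s, x)) ((1:ℝ), (0 : EuclideanSpace ℝ (Fin d))) t :=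
      (hasDerivAt_id t).prodMk (hasDerivAt_const t x)
    exact h1.comp_hasDerivAt t h2
  set F' : ℝ → EuclideanSpace ℝ (Fin d) → ℝ := fun t x =>
    ψ x ^ k * (fderiv ℝ V (t, x) (1, 0) * p * v t x ^ (p - 1)) with hF'
  have cont' : ContinuousOn (fun q : ℝ × EuclideanSpace ℝ (Fin d) => F' q.1 q.2)
      (Ioo (0:ℝ) T ×ˢ univ) := by
    rintro ⟨t, x⟩ ⟨ht, -⟩
    apply ContinuousAt.continuousWithinAt
    have c1 : ContinuousAt (fun q : ℝ × EuclideanSpace ℝ (Fin d) => fderiv ℝ V q (1, 0)) (t, x) := by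
      have := ((hv t ht x).fderiv_right (m := ((⊤ : ℕ∞) : WithTop ℕ∞))
        (by exact_mod_cast le_top)).continuousAt
      exact this.clm_apply continuousAt_const
    have c2 : ContinuousAt (fun q : ℝ × EuclideanSpace ℝ (Fin d) => v q.1 q.2 ^ (p - 1)) (t, x) :=
      (hv t ht x).continuousAt.rpow_const (Or.inl (hpos t ht x).ne')
    have c3 : ContinuousAt (fun q : ℝ × EuclideanSpace ℝ (Fin d) => ψ q.2 ^ k) (t, x) :=
      ((hψ.comp continuous_snd).pow k).continuousAt
    exact c3.mul ((c1.mul continuousAt_const).mul c2)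
  have hs : ∀ t ∈ Ioo (0:ℝ) T, Continuous (v t) := by
    intro t ht
    rw [continuous_iff_continuousAt]
    intro x
    exact (hv t ht x).continuousAt.comp (f := fun x => (t, x)) (by fun_prop)
  have hF : ∀ t ∈ Ioo (0:ℝ) T, Continuous (fun x => ψ x ^ k * v t x ^ p) := fun t ht =>
    (hψ.pow k).mul ((hs t ht).rpow_const fun x => Or.inl (hpos t ht x).ne')
  obtain ⟨ε, hε, hsub⟩ := Metric.nhds_basis_closedBall.mem_iff.1 (Ioo_mem_nhds ht₀.1 ht₀.2)
  have hK : IsCompact (closedBall t₀ ε ×ˢ tsupport ψ) := (isCompact_closedBall _ _).prod hc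
  obtain ⟨B, hB⟩ := hK.exists_bound_of_continuousOn
    (cont'.mono (prod_mono hsub (subset_univ _)))
  have hF't : Continuous (F' t₀) := by
    rw [← continuousOn_univ]
    exact cont'.comp (f := fun x => (t₀, x)) (by fun_prop) (fun x _ => ⟨ht₀, mem_univ _⟩)
  have hck : HasCompactSupport (fun x => ψ x ^ k) :=
      hc.comp_left (g := fun y : ℝ => y ^ k) (by simp; omega)
  have res := hasDerivAt_integral_of_dominated_loc_of_deriv_le (μ := volume)
    (F := fun t x => ψ x ^ k * v t x ^ p) (F' := F') (x₀ := t₀) (s := closedBall t₀ ε)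
    (bound := (tsupport ψ).indicator fun _ => B)
    (closedBall_mem_nhds t₀ hε)
    (by filter_upwards [Ioo_mem_nhds ht₀.1 ht₀.2] with t ht using (hF t ht).aestronglyMeasurable)
    ((hF t₀ ht₀).integrable_of_hasCompactSupport hck.mul_right)
    hF't.aestronglyMeasurable
    (Filter.Eventually.of_forall fun x t ht => by
      by_cases hx : x ∈ tsupport ψ
      · rw [indicator_of_mem hx]; exact hB (t, x) ⟨ht, hx⟩
      · rw [indicator_of_notMem hx]
        simp only [hF', image_eq_zero_of_notMem_tsupport hx]
        rw [zero_pow (by omega)]; simp)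
    ((integrable_indicator_iff (isClosed_tsupport ψ).measurableSet).2
      (integrableOn_const hc.measure_lt_top.ne))
    (Filter.Eventually.of_forall fun x t ht =>
      ((hder t (hsub ht) x).rpow_const (Or.inl (hpos t (hsub ht) x).ne')).const_mul _)
  refine res.2.congr_deriv ?_
  simp only [hF', (hder t₀ ht₀ _).deriv]

lemma core {ψ : EuclideanSpace ℝ (Fin d) → ℝ}
    {v : ℝ → EuclideanSpace ℝ (Fin d) → ℝ} {T : ℝ}
    (hv : ∀ t ∈ Ioo (0:ℝ) T, ∀ x, ContDiffAt ℝ (⊤ : ℕ∞)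
      (fun q : ℝ × EuclideanSpace ℝ (Fin d) => v q.1 q.2) (t, x))
    (hpos : ∀ t ∈ Ioo (0:ℝ) T, ∀ x, 0 < v t x)
    (hψ : ContDiff ℝ (⊤ : ℕ∞) ψ) (hc : HasCompactSupport ψ) (hψ0 : ∀ x, 0 ≤ ψ x) (hψ1 : ∀ x, ψ x ≤ 1)
    (x₀ : EuclideanSpace ℝ (Fin d)) (R R₀ : ℝ) (hR : 0 < R)
    (hin : ∀ x ∈ ball x₀ R, ψ x = 1) (hout : ∀ x, x ∉ ball x₀ R₀ → ψ x = 0)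
    (D : ℝ) (hD : ∀ e : EuclideanSpace ℝ (Fin d), ‖e‖ = 1 → ∀ x,
        dvX e ψ x ^ 2 ≤ D ∧ |dvX e (dvX e ψ) x| ≤ D)
    (m p lam mu β : ℝ) (hm : m ≠ 0) (hp : 1 ≤ p)
    (n : ℕ) (hn : 1 ≤ n) (hlam : 0 ≤ lam) (hmu : 0 ≤ mu)
    (hβ0 : 0 < β) (hβ1 : β < 1) (hβ : p * (1 - β) = p + m - 1) (hk : 2 ≤ ((n:ℝ) + 2) * β)
    (hq : ∀ a b : ℝ, 0 ≤ (p - 1) * a ^ 2 + (1 - lam * (p + m - 1)) * a * b + mu * b ^ 2)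
    (heq : ∀ t ∈ Ioo (0:ℝ) T, ∀ x, ψ x ≠ 0 →
      deriv (fun s => v s x) t = spaceLap (fun y => v t y ^ m) x / m)
    {s t : ℝ} (hs : 0 < s) (hst : s ≤ t) (ht : t < T) :
    (∫ x, ψ x ^ (n + 2) * v t x ^ p) ^ β ≤ (∫ x, ψ x ^ (n + 2) * v s x ^ p) ^ β +
      (1 - m) * (d * (((mu + lam) * (n + 2) ^ 2 * D) *
        (volume (ball x₀ R₀ \ ball x₀ R)).toReal ^ β)) * (t - s) := by
  set Y : ℝ → ℝ := fun t => ∫ x, ψ x ^ (n + 2) * v t x ^ p with hY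
  set K := d * (((mu + lam) * ((n:ℝ) + 2) ^ 2 * D) *
        (volume (ball x₀ R₀ \ ball x₀ R)).toReal ^ β) with hK
  have hsm : ∀ t ∈ Ioo (0:ℝ) T, ContDiff ℝ (⊤ : ℕ∞) (v t) := by
    intro t ht
    rw [contDiff_iff_contDiffAt]
    intro x
    exact (hv t ht x).comp (f := fun x => (t, x)) x (by fun_prop)
  have Yd := fun t (ht : t ∈ Ioo (0:ℝ) T) =>
    time_deriv hψ.continuous hc hv hpos p (n + 2) (by omega) ht
  have Ypos : ∀ t ∈ Ioo (0:ℝ) T, 0 < Y t := by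
    intro t ht
    have cw : Continuous (fun x => ψ x ^ (n + 2) * v t x ^ p) :=
      (hψ.continuous.pow _).mul ((hsm t ht).continuous.rpow_const
        fun x => Or.inl (hpos t ht x).ne')
    have hck : HasCompactSupport (fun x => ψ x ^ (n + 2)) :=
      hc.comp_left (g := fun y : ℝ => y ^ (n + 2)) (by simp)
    refine cw.integral_pos_of_hasCompactSupport_nonneg_nonzero (x := x₀) hck.mul_right
      (fun x => mul_nonneg (pow_nonneg (hψ0 x) _) (rpow_nonneg (hpos t ht x).le _)) ?_
    rw [hin x₀ (mem_ball_self hR)]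
    simpa using (rpow_pos_of_pos (hpos t ht x₀) p).ne'
  have Yle : ∀ t ∈ Ioo (0:ℝ) T,
      ∫ x, ψ x ^ (n + 2) * (deriv (fun s => v s x) t * p * v t x ^ (p - 1)) ≤
        p * (K * Y t ^ (1 - β)) := by
    intro t ht
    have := spat (hsm t ht) (hpos t ht) hψ hc hψ0 hψ1 x₀ R R₀ hin hout D hD m p lam mu β hm n hn
      hlam hmu hβ0 hβ1 hβ hk hq
    have e : ∫ x, ψ x ^ (n + 2) * (deriv (fun s => v s x) t * p * v t x ^ (p - 1)) =
        p * ∫ x, ψ x ^ (n + 2) * v t x ^ (p - 1) * (spaceLap (fun y => v t y ^ m) x / m) := by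
      rw [← integral_const_mul]
      congr 1
      funext x
      by_cases hx : ψ x = 0
      · simp [hx]
      · rw [heq t ht x hx]; ring
    rw [e]
    refine mul_le_mul_of_nonneg_left (this.trans_eq ?_) (by linarith)
    rw [hK]; ring
  have Zd : ∀ t ∈ Ioo (0:ℝ) T, HasDerivAt (fun t => Y t ^ β) _ t := fun t ht =>
    (Yd t ht).rpow_const (p := β) (Or.inl (Ypos t ht).ne')
  have hsub : Icc s t ⊆ Ioo 0 T := fun r hr => ⟨hs.trans_le hr.1, hr.2.trans_lt ht⟩
  have := (convex_Icc s t).image_sub_le_mul_sub_of_deriv_le (f := fun t => Y t ^ β)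
    (C := (1 - m) * K)
    (fun r hr => (Zd r (hsub hr)).continuousAt.continuousWithinAt)
    (fun r hr => (Zd r (hsub (interior_subset hr))).differentiableAt.differentiableWithinAt)
    (fun r hr => by
      have hr' := hsub (interior_subset hr)
      rw [(Zd r hr').deriv]
      have hYp := Ypos r hr'
      have h1 := mul_le_mul_of_nonneg_right (Yle r hr')
        (show 0 ≤ β * Y r ^ (β - 1) from mul_nonneg hβ0.le (rpow_nonneg hYp.le _))
      have h2 : Y r ^ (1 - β) * Y r ^ (β - 1) = 1 := by
        rw [← rpow_add hYp]; simp
      calc _ ≤ _ := (mul_assoc _ _ _).le.trans h1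
        _ = (p * β) * K * (Y r ^ (1 - β) * Y r ^ (β - 1)) := by ring
        _ = _ := by rw [h2, show p * β = 1 - m by linarith]; ring)
    s (left_mem_Icc.2 hst) t (right_mem_Icc.2 hst) hst
  linarith

lemma exists_weights (m : ℝ) (hm1 : m < 1) (hm0 : m ≠ 0) : ∃ L : ℝ, 0 < L ∧
    ∀ p : ℝ, 1 ≤ p → 1 - m < p → ∃ lam mu : ℝ, 0 ≤ lam ∧ 0 ≤ mu ∧ (mu + lam) * p ≤ L ∧
      ∀ a b : ℝ, 0 ≤ (p - 1) * a ^ 2 + (1 - lam * (p + m - 1)) * a * b + mu * b ^ 2 := by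
  rcases lt_or_gt_of_ne hm0 with hm | hm
  · refine ⟨(1 - m) / (-m), div_pos (by linarith) (by linarith), fun p hp hpm => ?_⟩
    have hp1 : 0 < p - 1 := by linarith
    refine ⟨0, 1 / (4 * (p - 1)), le_rfl, by positivity, ?_, fun a b => ?_⟩
    · rw [add_zero, one_div, inv_mul_eq_div, div_le_div_iff₀ (by linarith) (by linarith)]
      nlinarith
    · have : (p - 1) * a ^ 2 + (1 - 0 * (p + m - 1)) * a * b + 1 / (4 * (p - 1)) * b ^ 2 =
        (2 * (p - 1) * a + b) ^ 2 / (4 * (p - 1)) := by field_simp; ring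
      rw [this]; positivity
  · refine ⟨1 / m, by positivity, fun p hp hpm => ?_⟩
    have ha : 0 < p + m - 1 := by linarith
    refine ⟨1 / (p + m - 1), 0, by positivity, le_rfl, ?_, fun a b => ?_⟩
    · rw [zero_add, one_div, inv_mul_eq_div, div_le_div_iff₀ ha hm]
      nlinarith
    · rw [one_div, inv_mul_cancel₀ ha.ne']
      have : 0 ≤ p - 1 := by linarith
      have : 0 ≤ (p - 1) * a ^ 2 := by positivity
      linarith

end time

/-- **Theorem 3.2: evolution of local `L^p` norms.** -/
theorem local_Lp_norm_evolution
    (d : ℕ) (hd : 1 ≤ d) (m : ℝ) (hm1 : m < 1) (hm0 : m ≠ 0) :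
    ∃ c : ℝ, 0 < c ∧
      ∀ (p : ℝ), 1 ≤ p → 1 - m < p →
      ∀ (Ω : Set (EuclideanSpace ℝ (Fin d))), IsOpen Ω →
      ∀ (u : ℝ → EuclideanSpace ℝ (Fin d) → ℝ) (T : ℝ), 0 < T →
        IsFDESolM m (Ioo 0 T ×ˢ Ω) u →
      ∀ (x₀ : EuclideanSpace ℝ (Fin d)) (R R₀ : ℝ), 0 < R → R < R₀ →
        ball x₀ R₀ ⊆ Ω →
        (∀ t ∈ Ioo (0 : ℝ) T, IntegrableOn (fun x => u t x ^ p) (ball x₀ R₀)) →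
      ∀ s t : ℝ, 0 < s → s ≤ t → t < T →
        (∫ x in ball x₀ R, u t x ^ p) ^ ((1 - m) / p) ≤
          (∫ x in ball x₀ R₀, u s x ^ p) ^ ((1 - m) / p) +
          p * c * (volume (ball x₀ R₀ \ ball x₀ R)).toReal ^ ((1 - m) / p) /
            (R₀ - R) ^ 2 * (t - s) := by
  obtain ⟨M, hM, hcut⟩ := exists_cutoff d
  obtain ⟨L, hL, hwt⟩ := exists_weights m hm1 hm0
  have h1m : 0 < 1 - m := by linarith
  set B := 2 / (1 - m) + 1 with hB
  have hB0 : 0 < B := by positivity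
  have hdpos : (0:ℝ) < d := by exact_mod_cast hd
  refine ⟨(1 - m) * d * L * B ^ 2 * M, by positivity, ?_⟩
  intro p hp hpm Ω hΩ u T hT hu x₀ R R₀ hR hRR hsub hint s t hs hst ht
  obtain ⟨hupos, husm, hupde⟩ := hu
  obtain ⟨ψ, hψ, hψ0, hψ1, hψin, hψout, hψD⟩ := hcut x₀ R R₀ hR hRR
  obtain ⟨lam, mu, hlam, hmu, hlm, hq⟩ := hwt p hp hpm
  have hp0 : 0 < p := by linarith
  set β := (1 - m) / p with hβ
  have hβ0 : 0 < β := by positivity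
  have hβ1 : β < 1 := by rw [hβ, div_lt_one hp0]; exact hpm
  have hβe : p * (1 - β) = p + m - 1 := by rw [hβ]; field_simp; ring
  -- exponent
  have hceil : 2 < ⌈2 * p / (1 - m)⌉₊ := by
    rw [Nat.lt_ceil]
    push_cast
    rw [lt_div_iff₀ h1m]; linarith
  obtain ⟨n, hn⟩ : ∃ n, ⌈2 * p / (1 - m)⌉₊ = n + 2 := ⟨⌈2 * p / (1 - m)⌉₊ - 2, by omega⟩
  have hn1 : 1 ≤ n := by omega
  have hnlo : 2 * p / (1 - m) ≤ (n:ℝ) + 2 := by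
    have := Nat.le_ceil (2 * p / (1 - m))
    rw [hn] at this; push_cast at this; exact this
  have hnhi : (n:ℝ) + 2 ≤ p * B := by
    have := Nat.ceil_lt_add_one (a := 2 * p / (1 - m)) (by positivity)
    rw [hn] at this; push_cast at this
    have e : p * B = 2 * p / (1 - m) + p := by rw [hB]; ring
    linarith
  have hk : 2 ≤ ((n:ℝ) + 2) * β := by
    calc (2:ℝ) = 2 * p / (1 - m) * β := by rw [hβ]; field_simp
      _ ≤ _ := by gcongr
  -- radii
  set R₁ := (R + R₀) / 2 with hR1
  have hR1a : R < R₁ := by rw [hR1]; linarith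
  have hR1b : R₁ < R₀ := by rw [hR1]; linarith
  let χ : ContDiffBump x₀ := ⟨R₁, (R₁ + R₀) / 2, by linarith, by linarith⟩
  have hχout : χ.rOut < R₀ := show (R₁ + R₀) / 2 < R₀ by linarith
  set v : ℝ → EuclideanSpace ℝ (Fin d) → ℝ := fun t x => χ x * u t x + (1 - χ x) with hv
  have hO : IsOpen (Ioo (0:ℝ) T ×ˢ Ω) := isOpen_Ioo.prod hΩ
  have hvsm : ∀ t ∈ Ioo (0:ℝ) T, ∀ x, ContDiffAt ℝ (⊤ : ℕ∞)
      (fun q : ℝ × EuclideanSpace ℝ (Fin d) => v q.1 q.2) (t, x) := by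
    intro t ht x
    have cχ : ContDiff ℝ (⊤ : ℕ∞) (fun q : ℝ × EuclideanSpace ℝ (Fin d) => χ q.2) :=
      χ.contDiff.comp contDiff_snd
    by_cases hx : x ∈ ball x₀ R₀
    · have := husm.contDiffAt (hO.mem_nhds (x := (t, x)) ⟨ht, hsub hx⟩)
      exact (cχ.contDiffAt.mul this).add (contDiffAt_const.sub cχ.contDiffAt)
    · have hx' : χ.rOut < dist x x₀ := by
        rw [mem_ball, not_lt] at hx; linarith
      have : (fun q : ℝ × EuclideanSpace ℝ (Fin d) => v q.1 q.2) =ᶠ[nhds (t, x)] fun _ => 1 := by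
        have ho : IsOpen {q : ℝ × EuclideanSpace ℝ (Fin d) | χ.rOut < dist q.2 x₀} :=
          isOpen_lt continuous_const (by fun_prop)
        filter_upwards [ho.mem_nhds hx'] with q hq
        simp [hv, χ.zero_of_le_dist (le_of_lt hq)]
      exact contDiffAt_const.congr_of_eventuallyEq this
  have hvpos : ∀ t ∈ Ioo (0:ℝ) T, ∀ x, 0 < v t x := by
    intro t ht x
    simp only [hv]
    by_cases hx : x ∈ ball x₀ χ.rOut
    · have h1 := χ.pos_of_mem_ball hx
      have h2 := χ.le_one (x := x)
      have h3 := hupos (t, x) ⟨ht, hsub (ball_subset_ball hχout.le hx)⟩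
      have := mul_pos h1 h3
      simp only at this
      linarith
    · rw [mem_ball, not_lt] at hx
      rw [χ.zero_of_le_dist hx]; simp
  have hvu : ∀ t, ∀ x ∈ ball x₀ R₁, v t x = u t x := by
    intro t x hx
    have : χ x = 1 := χ.one_of_mem_closedBall (ball_subset_closedBall hx)
    simp [hv, this]
  have hc : HasCompactSupport ψ := by
    refine HasCompactSupport.intro (isCompact_closedBall x₀ R₁) fun x hx => ?_
    exact hψout x fun h => hx (ball_subset_closedBall h)
  have heq : ∀ t ∈ Ioo (0:ℝ) T, ∀ x, ψ x ≠ 0 →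
      deriv (fun s => v s x) t = spaceLap (fun y => v t y ^ m) x / m := by
    intro t ht x hx
    have hxb : x ∈ ball x₀ R₁ := by
      by_contra h; exact hx (hψout x h)
    have e1 : (fun s => v s x) = fun s => u s x := funext fun s => hvu s x hxb
    have e2 : (fun y => v t y ^ m) =ᶠ[nhds x] fun y => u t y ^ m := by
      filter_upwards [isOpen_ball.mem_nhds hxb] with y hy
      rw [hvu t y hy]
    have e3 : spaceLap (fun y => v t y ^ m) x = spaceLap (fun y => u t y ^ m) x := by
      unfold spaceLap
      refine Finset.sum_congr rfl fun i _ => ?_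
      have : (fun y => fderiv ℝ (fun y => v t y ^ m) y (EuclideanSpace.single i 1)) =ᶠ[nhds x]
          (fun y => fderiv ℝ (fun y => u t y ^ m) y (EuclideanSpace.single i 1)) := by
        filter_upwards [e2.fderiv (𝕜 := ℝ)] with y hy
        rw [hy]
      rw [this.fderiv_eq]
    rw [e1, e3]
    exact hupde (t, x) ⟨ht, hsub (ball_subset_ball hR1b.le hxb)⟩
  have main := core hvsm hvpos hψ hc hψ0 hψ1 x₀ R R₀ hR hψin
    (fun x hx => hψout x fun h => hx (ball_subset_ball hR1b.le h)) (M / (R₀ - R) ^ 2) hψD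
    m p lam mu β hm0 hp n hn1 hlam hmu hβ0 hβ1 hβe hk hq heq hs hst ht
  have hsT : s ∈ Ioo (0:ℝ) T := ⟨hs, hst.trans_lt ht⟩
  have htT : t ∈ Ioo (0:ℝ) T := ⟨hs.trans_le hst, ht⟩
  have hδ : 0 < R₀ - R := by linarith
  have upos : ∀ r ∈ Ioo (0:ℝ) T, ∀ x ∈ ball x₀ R₀, 0 < u r x := fun r hr x hx =>
    hupos (r, x) ⟨hr, hsub hx⟩
  -- the weighted integral, as an integral over the big ball
  have hYr : ∀ r ∈ Ioo (0:ℝ) T, ∫ x, ψ x ^ (n + 2) * v r x ^ p =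
      ∫ x in ball x₀ R₀, ψ x ^ (n + 2) * u r x ^ p := by
    intro r hr
    rw [← integral_indicator measurableSet_ball]
    congr 1
    funext x
    by_cases hx : x ∈ ball x₀ R₁
    · rw [indicator_of_mem (ball_subset_ball hR1b.le hx), hvu r x hx]
    · by_cases hx0 : x ∈ ball x₀ R₀
      · rw [indicator_of_mem hx0, hψout x hx]; simp
      · rw [indicator_of_notMem hx0, hψout x hx]; simp
  have hYint : ∀ r ∈ Ioo (0:ℝ) T, IntegrableOn (fun x => ψ x ^ (n + 2) * u r x ^ p) (ball x₀ R₀) := by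
    intro r hr
    refine (hint r hr).bdd_mul (c := 1) (hψ.continuous.pow (n + 2)).aestronglyMeasurable
      (Filter.Eventually.of_forall fun x => ?_)
    rw [Real.norm_eq_abs, abs_of_nonneg (pow_nonneg (hψ0 x) _)]
    exact pow_le_one₀ (hψ0 x) (hψ1 x)
  have low : ∫ x in ball x₀ R, u t x ^ p ≤ ∫ x, ψ x ^ (n + 2) * v t x ^ p := by
    rw [hYr t htT]
    calc _ = ∫ x in ball x₀ R, ψ x ^ (n + 2) * u t x ^ p := by
          refine setIntegral_congr_fun measurableSet_ball fun x hx => ?_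
          simp only [hψin x hx, one_pow, one_mul]
      _ ≤ _ := by
          refine setIntegral_mono_set (hYint t htT) ?_
            (Filter.Eventually.of_forall (ball_subset_ball hRR.le))
          refine (ae_restrict_iff' measurableSet_ball).2 (Filter.Eventually.of_forall fun x hx => ?_)
          exact mul_nonneg (pow_nonneg (hψ0 x) _) (rpow_nonneg (upos t htT x hx).le _)
  have low0 : 0 ≤ ∫ x in ball x₀ R, u t x ^ p :=
    setIntegral_nonneg measurableSet_ball fun x hx =>
      rpow_nonneg (upos t htT x (ball_subset_ball hRR.le hx)).le _
  have up : ∫ x, ψ x ^ (n + 2) * v s x ^ p ≤ ∫ x in ball x₀ R₀, u s x ^ p := by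
    rw [hYr s hsT]
    refine setIntegral_mono_on (hYint s hsT) (hint s hsT) measurableSet_ball fun x hx => ?_
    exact mul_le_of_le_one_left (rpow_nonneg (upos s hsT x hx).le _)
      (pow_le_one₀ (hψ0 x) (hψ1 x))
  have up0 : 0 ≤ ∫ x, ψ x ^ (n + 2) * v s x ^ p :=
    integral_nonneg fun x => mul_nonneg (pow_nonneg (hψ0 x) _) (rpow_nonneg (hvpos s hsT x).le _)
  have hcst : (mu + lam) * ((n:ℝ) + 2) ^ 2 ≤ p * L * B ^ 2 := by
    calc (mu + lam) * ((n:ℝ) + 2) ^ 2 ≤ (mu + lam) * (p * B) ^ 2 := by gcongr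
      _ = ((mu + lam) * p) * (p * B ^ 2) := by ring
      _ ≤ L * (p * B ^ 2) := by gcongr
      _ = _ := by ring
  set VA := (volume (ball x₀ R₀ \ ball x₀ R)).toReal ^ β with hVA
  have hVA0 : 0 ≤ VA := rpow_nonneg ENNReal.toReal_nonneg _
  have hts : 0 ≤ t - s := by linarith
  calc (∫ x in ball x₀ R, u t x ^ p) ^ β ≤ (∫ x, ψ x ^ (n + 2) * v t x ^ p) ^ β :=
        rpow_le_rpow low0 low hβ0.le
    _ ≤ _ := main
    _ ≤ (∫ x in ball x₀ R₀, u s x ^ p) ^ β +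
        (1 - m) * (d * ((p * L * B ^ 2 * (M / (R₀ - R) ^ 2)) * VA)) * (t - s) := by
        gcongr
    _ = _ := by ring
end
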